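/- arXiv:0705.2975 — 3 statements merged into one kernel-verified Lean document; each statement's English description precedes it below -/
import Mathlib

section
/- Let k ⊆ K be difference fields of characteristic zero such that K is generated as a field over k by C_K. Let A ∈ GL_n(k), let Y be an n×n matrix of indeterminates with σ(Y) = AY, and let R = k[Y, 1/det(Y)]/q be a Picard-Vessiot ring for σ(X) = AX over k with C_R = C_k, where q is a maximal σ-ideal of k[Y, 1/det(Y)]. Then S = K[Y, 1/det(Y)]/(q·K[Y, 1/det(Y)]) is a Picard-Vessiot ring for σ(X) = AX over K, and C_S = C_K. -/
open scoped TensorProduct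

noncomputable section

namespace PV

set_option synthInstance.maxHeartbeats 1000000

/-! Basic difference-algebra vocabulary -/

theorem iter_mul {R : Type*} [Ring R] (σ : R ≃+* R) :
    ∀ (m : ℕ) (a b : R), (⇑σ)^[m] (a * b) = (⇑σ)^[m] a * (⇑σ)^[m] b := by
  intro m
  induction m with
  | zero => intro a b; rfl
  | succ k ih =>
    intro a b
    simp only [Function.iterate_succ_apply, map_mul]
    exact ih _ _

theorem iter_add {R : Type*} [Ring R] (σ : R ≃+* R) :
    ∀ (m : ℕ) (a b : R), (⇑σ)^[m] (a + b) = (⇑σ)^[m] a + (⇑σ)^[m] b := by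
  intro m
  induction m with
  | zero => intro a b; rfl
  | succ k ih =>
    intro a b
    simp only [Function.iterate_succ_apply, map_add]
    exact ih _ _

theorem iter_neg {R : Type*} [Ring R] (σ : R ≃+* R) :
    ∀ (m : ℕ) (a : R), (⇑σ)^[m] (-a) = -((⇑σ)^[m] a) := by
  intro m
  induction m with
  | zero => intro a; rfl
  | succ k ih =>
    intro a
    simp only [Function.iterate_succ_apply, map_neg]
    exact ih _

theorem iter_inv {K : Type*} [Field K] (σ : K ≃+* K) :
    ∀ (m : ℕ) (a : K), (⇑σ)^[m] a⁻¹ = ((⇑σ)^[m] a)⁻¹ := by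
  intro m
  induction m with
  | zero => intro a; rfl
  | succ k ih =>
    intro a
    simp only [Function.iterate_succ_apply, map_inv₀]
    exact ih _

/-- The subring of constants of a difference ring. -/
def constants {R : Type*} [Ring R] (σ : R ≃+* R) : Subring R where
  carrier := {r | σ r = r}
  one_mem' := map_one σ
  mul_mem' := fun {a b} ha hb => by
    simp only [Set.mem_setOf_eq] at *
    rw [map_mul, ha, hb]
  add_mem' := fun {a b} ha hb => by
    simp only [Set.mem_setOf_eq] at *
    rw [map_add, ha, hb]
  zero_mem' := map_zero σ
  neg_mem' := fun {a} ha => by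
    simp only [Set.mem_setOf_eq] at *
    rw [map_neg, ha]

/-- The subfield of constants of a difference field. -/
def constantsF {K : Type*} [Field K] (σ : K ≃+* K) : Subfield K :=
  { constants σ with
    inv_mem' := fun a ha => by
      show σ a⁻¹ = a⁻¹
      rw [map_inv₀]
      exact congrArg Inv.inv ha }

/-- The subring `D_R` of elements fixed by some positive power of `σ`. -/
def periodic {R : Type*} [Ring R] (σ : R ≃+* R) : Subring R where
  carrier := {a | ∃ m, 0 < m ∧ (⇑σ)^[m] a = a}
  one_mem' := ⟨1, one_pos, by simp⟩
  zero_mem' := ⟨1, one_pos, by simp⟩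
  mul_mem' := fun {a b} ha hb => by
    obtain ⟨m, hm, ha⟩ := ha
    obtain ⟨m', hm', hb⟩ := hb
    refine ⟨m * m', Nat.mul_pos hm hm', ?_⟩
    rw [iter_mul]
    have h1 : (⇑σ)^[m * m'] a = a := by
      rw [Function.iterate_mul]; exact Function.iterate_fixed ha m'
    have h2 : (⇑σ)^[m * m'] b = b := by
      rw [mul_comm, Function.iterate_mul]; exact Function.iterate_fixed hb m
    rw [h1, h2]
  add_mem' := fun {a b} ha hb => by
    obtain ⟨m, hm, ha⟩ := ha
    obtain ⟨m', hm', hb⟩ := hb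
    refine ⟨m * m', Nat.mul_pos hm hm', ?_⟩
    rw [iter_add]
    have h1 : (⇑σ)^[m * m'] a = a := by
      rw [Function.iterate_mul]; exact Function.iterate_fixed ha m'
    have h2 : (⇑σ)^[m * m'] b = b := by
      rw [mul_comm, Function.iterate_mul]; exact Function.iterate_fixed hb m
    rw [h1, h2]
  neg_mem' := fun {a} ha => by
    obtain ⟨m, hm, ha⟩ := ha
    exact ⟨m, hm, by rw [iter_neg, ha]⟩

/-- The subfield `D_L` of a difference field: elements fixed by some positive power of `σ`. -/
def periodicF {K : Type*} [Field K] (σ : K ≃+* K) : Subfield K :=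
  { periodic σ with
    inv_mem' := fun a ha => by
      obtain ⟨m, hm, ha⟩ := ha
      exact ⟨m, hm, by rw [iter_inv, ha]⟩ }

/-- The degree `[F : E]` of nested subfields of a field. -/
def subdeg {X : Type*} [Field X] (E F : Subfield X) (h : E ≤ F) : ℕ :=
  letI : Algebra E F := (Subfield.inclusion h).toAlgebra
  Module.finrank E F

/-- `F` is a finite extension of the subfield `E` (both subfields of a common field). -/
def SubfieldFinite {X : Type*} [Field X] (E F : Subfield X) : Prop :=
  ∃ h : E ≤ F,
    letI : Algebra E F := (Subfield.inclusion h).toAlgebra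
    Module.Finite E F

/-- `σR` extends `σk` along `algebraMap k R`. -/
def DiffCompat {k R : Type*} [CommRing k] [CommRing R] [Algebra k R]
    (σk : k ≃+* k) (σR : R ≃+* R) : Prop :=
  ∀ x : k, σR (algebraMap k R x) = algebraMap k R (σk x)

/-- the constants of `R` are (the image of) the constants of `k`: `C_R = C_k`. -/
def ConstantsMatch {k R : Type*} [CommRing k] [CommRing R] [Algebra k R]
    (σk : k ≃+* k) (σR : R ≃+* R) : Prop :=
  ∀ r : R, σR r = r → ∃ c : k, σk c = c ∧ algebraMap k R c = r

/-- A difference ring is simple if its only σ-invariant ideals are `⊥` and `⊤`. -/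
def IsSimpleDiff {R : Type*} [CommRing R] (σ : R ≃+* R) : Prop :=
  ∀ I : Ideal R, (∀ x ∈ I, σ x ∈ I) → I = ⊥ ∨ I = ⊤

/-- The set of entries of a square matrix. -/
def entries {R : Type*} {n : ℕ} (M : Matrix (Fin n) (Fin n) R) : Set R :=
  Set.range fun p : Fin n × Fin n => M p.1 p.2

/-- `Z` is a fundamental solution matrix for `σ(X) = A X`:  `σ Z = A Z` entrywise. -/
def FundMatrix {k R : Type*} {n : ℕ} [CommRing k] [CommRing R] [Algebra k R]
    (σR : R ≃+* R) (A : (Matrix (Fin n) (Fin n) k)ˣ) (Z : (Matrix (Fin n) (Fin n) R)ˣ) : Prop :=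
  Z.val.map ⇑σR = A.val.map (algebraMap k R) * Z.val

/-- `R` is a Picard-Vessiot ring for `σ(X) = A X` over `k`. -/
def IsPVRing {k R : Type*} {n : ℕ} [CommRing k] [CommRing R] [Algebra k R]
    (σk : k ≃+* k) (σR : R ≃+* R) (A : (Matrix (Fin n) (Fin n) k)ˣ) : Prop :=
  DiffCompat σk σR ∧ IsSimpleDiff σR ∧
    ∃ Z : (Matrix (Fin n) (Fin n) R)ˣ, FundMatrix σR A Z ∧
      Algebra.adjoin k (entries Z.val ∪ entries (↑Z⁻¹ : Matrix (Fin n) (Fin n) R)) = ⊤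

/-- `R` is a weak Picard-Vessiot ring for `σ(X) = A X` over `k`. -/
def IsWeakPVRing {k R : Type*} {n : ℕ} [CommRing k] [CommRing R] [Algebra k R]
    (σk : k ≃+* k) (σR : R ≃+* R) (A : (Matrix (Fin n) (Fin n) k)ˣ) : Prop :=
  DiffCompat σk σR ∧ ConstantsMatch σk σR ∧
    ∃ Z : (Matrix (Fin n) (Fin n) R)ˣ, FundMatrix σR A Z ∧
      Algebra.adjoin k (entries Z.val ∪ entries (↑Z⁻¹ : Matrix (Fin n) (Fin n) R)) = ⊤

/-! The generic difference ring `k[Y, 1/det Y]` -/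

/-- The generic `n × n` matrix with polynomial indeterminate entries. -/
def genMat (k : Type*) [CommRing k] (n : ℕ) :
    Matrix (Fin n) (Fin n) (MvPolynomial (Fin n × Fin n) k) :=
  Matrix.of fun i j => MvPolynomial.X (i, j)

/-- The generic ring `k[Y_{ij}, 1/det Y]`. -/
abbrev GenRing (k : Type*) [CommRing k] (n : ℕ) : Type _ :=
  Localization.Away (genMat k n).det

/-- The images of the indeterminates `Y_{ij}` in the generic ring. -/
def Yent (k : Type*) [CommRing k] (n : ℕ) (i j : Fin n) : GenRing k n :=
  algebraMap (MvPolynomial (Fin n × Fin n) k) (GenRing k n) (genMat k n i j)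

/-- The inverse of `det Y` in the generic ring. -/
def invDet (k : Type*) [CommRing k] (n : ℕ) : GenRing k n :=
  IsLocalization.Away.invSelf (genMat k n).det

/-- The transcendence degree of `L` over `F` equals `d`. -/
def TrdegEq (F L : Type*) [Field F] [Field L] [Algebra F L] (d : ℕ) : Prop :=
  ∃ s : Finset L, s.card = d ∧
    AlgebraicIndependent F (Subtype.val : ((s : Set L)) → L) ∧
    Algebra.IsAlgebraic (IntermediateField.adjoin F (s : Set L)) L

/-! decompositions into primitive idempotents and the `m`-invariant -/

/-- `e` lists the primitive idempotents of a difference ring, permuted cyclically by `σ`. -/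
def IsDecomp {R' : Type*} [CommRing R'] (σ' : R' ≃+* R') {ℓ : ℕ} (e : Fin ℓ → R') : Prop :=
  (∀ i, IsIdempotentElem (e i)) ∧
  (Pairwise fun i j => e i * e j = 0) ∧
  (∑ i, e i) = 1 ∧
  (∀ i, e i ≠ 0 ∧ ∀ f : R', IsIdempotentElem f → f * e i = f → f = 0 ∨ f = e i) ∧
  (∀ i : Fin ℓ, σ' (e i) = e ⟨(i.1 + 1) % ℓ, Nat.mod_lt _ (Nat.zero_lt_of_lt i.isLt)⟩)

/-- The `m`-invariant of a Picard-Vessiot ring `R'` over `K` equals `m`: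
`m = ℓ(R') * [D_{R₀*} : D_K · C_{R₀*}]`, where `R₀` is the quotient of `R'` by the ideal
generated by `1 - e₀`, and `R₀*` is its fraction field carrying the automorphism induced
by `σ'^ℓ`. -/
def HasMInvariant {K R' : Type*} [Field K] [CommRing R'] [Algebra K R']
    (σK : K ≃+* K) (σ' : R' ≃+* R') (m : ℕ) : Prop :=
  ∃ (ℓ : ℕ) (hℓ : 0 < ℓ) (e : Fin ℓ → R'), IsDecomp σ' e ∧
    ∀ (hdom : IsDomain (R' ⧸ Ideal.span {1 - e ⟨0, hℓ⟩})),
      letI : IsDomain (R' ⧸ Ideal.span {1 - e ⟨0, hℓ⟩}) := hdom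
      ∀ (σQ : FractionRing (R' ⧸ Ideal.span {1 - e ⟨0, hℓ⟩}) ≃+*
              FractionRing (R' ⧸ Ideal.span {1 - e ⟨0, hℓ⟩})),
        (∀ x : R',
            σQ (algebraMap (R' ⧸ Ideal.span {1 - e ⟨0, hℓ⟩})
                  (FractionRing (R' ⧸ Ideal.span {1 - e ⟨0, hℓ⟩}))
                  (Ideal.Quotient.mk (Ideal.span {1 - e ⟨0, hℓ⟩}) x)) =
            algebraMap (R' ⧸ Ideal.span {1 - e ⟨0, hℓ⟩})
                  (FractionRing (R' ⧸ Ideal.span {1 - e ⟨0, hℓ⟩}))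
                  (Ideal.Quotient.mk (Ideal.span {1 - e ⟨0, hℓ⟩}) ((⇑σ')^[ℓ] x))) →
        ∃ h : Subfield.closure
              ((⇑((algebraMap (R' ⧸ Ideal.span {1 - e ⟨0, hℓ⟩})
                    (FractionRing (R' ⧸ Ideal.span {1 - e ⟨0, hℓ⟩}))).comp
                  ((Ideal.Quotient.mk (Ideal.span {1 - e ⟨0, hℓ⟩})).comp (algebraMap K R'))) ''
                 {a : K | ∃ m', 0 < m' ∧ (⇑σK)^[m'] a = a}) ∪
               (constantsF σQ : Set (FractionRing (R' ⧸ Ideal.span {1 - e ⟨0, hℓ⟩})))) ≤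
              periodicF σQ,
          m = ℓ * subdeg _ _ h


/-- A nonzero σ-stable submodule of a free module over a simple difference ring contains
a nonzero vector with constant coordinates. -/
theorem exists_const_vec {R ι : Type*} [CommRing R] (σ : R ≃+* R) (hs : IsSimpleDiff σ)
    (N : Submodule R (ι →₀ R))
    (hN : ∀ f ∈ N, Finsupp.mapRange σ (map_zero σ) f ∈ N) (hne : ∃ f ∈ N, f ≠ 0) :
    ∃ f ∈ N, f ≠ 0 ∧ ∀ i, σ (f i) = f i := by
  classical
  have hex : ∃ m : ℕ, ∃ f ∈ N, f ≠ 0 ∧ f.support.card = m := by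
    obtain ⟨f, hf, h0⟩ := hne
    exact ⟨_, f, hf, h0, rfl⟩
  obtain ⟨f₀, hf₀, h0, hcard⟩ := Nat.find_spec hex
  have hmin : ∀ g ∈ N, g.support.card < f₀.support.card → g = 0 := by
    intro g hg hlt
    by_contra hg0
    rw [hcard] at hlt
    exact Nat.find_min hex hlt ⟨g, hg, hg0, rfl⟩
  obtain ⟨b, hb⟩ := Finsupp.support_nonempty_iff.mpr h0
  let J : Ideal R :=
    { carrier := {r | ∃ f ∈ N, f.support ⊆ f₀.support ∧ f b = r}
      zero_mem' := ⟨0, N.zero_mem, by simp, rfl⟩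
      add_mem' := by
        rintro x y ⟨f, hf, hfs, rfl⟩ ⟨g, hg, hgs, rfl⟩
        exact ⟨f + g, N.add_mem hf hg,
          Finsupp.support_add.trans (Finset.union_subset hfs hgs), rfl⟩
      smul_mem' := by
        rintro c x ⟨f, hf, hfs, rfl⟩
        exact ⟨c • f, N.smul_mem c hf, Finsupp.support_smul.trans hfs, rfl⟩ }
  have hJ : J = ⊥ ∨ J = ⊤ := by
    apply hs
    rintro x ⟨f, hf, hfs, rfl⟩
    exact ⟨_, hN f hf, Finsupp.support_mapRange.trans hfs, by simp⟩
  have hJne : J ≠ ⊥ := by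
    intro h
    have : f₀ b ∈ J := ⟨f₀, hf₀, le_refl _, rfl⟩
    rw [h, Ideal.mem_bot] at this
    exact (Finsupp.mem_support_iff.mp hb) this
  have h1 : (1 : R) ∈ J := by rw [hJ.resolve_left hJne]; trivial
  obtain ⟨f, hf, hfs, hfb⟩ := h1
  have hR : (1 : R) ≠ 0 := by
    intro h
    apply Finsupp.mem_support_iff.mp hb
    rw [← one_mul (f₀ b), h, zero_mul]
  refine ⟨f, hf, ?_, ?_⟩
  · rintro rfl
    exact hR (by simpa using hfb.symm)
  · have hz : Finsupp.mapRange σ (map_zero σ) f - f = 0 := by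
      apply hmin _ (N.sub_mem (hN f hf) hf)
      apply Finset.card_lt_card
      refine (Finset.ssubset_iff_of_subset ?_).mpr ⟨b, hb, ?_⟩
      · refine Finsupp.support_sub.trans (Finset.union_subset ?_ hfs)
        exact Finsupp.support_mapRange.trans hfs
      · simp [hfb]
    intro i
    have := DFunLike.congr_fun hz i
    simpa [sub_eq_zero] using this

theorem abstract_main {k K R S : Type*} [Field k] [Field K] [Algebra k K] [CommRing R]
    [CommRing S] [Nontrivial S] [Algebra k R] [Algebra K S]
    (σk : k ≃+* k) (σK : K ≃+* K) (σR : R ≃+* R) (σS : S ≃+* S)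
    (hkK : DiffCompat σk σK)
    (hKgen : IntermediateField.adjoin k {x : K | σK x = x} = ⊤)
    (hKS : DiffCompat σK σS) (ψ : R →+* S)
    (hψ : ∀ r, σS (ψ r) = ψ (σR r))
    (hψk : ∀ a : k, ψ (algebraMap k R a) = algebraMap K S (algebraMap k K a))
    (hspan : Submodule.span K (Set.range ψ) = ⊤)
    (hs : IsSimpleDiff σR) (hc : ConstantsMatch σk σR) :
    IsSimpleDiff σS ∧ ConstantsMatch σK σS := by
  classical
  let _ : Algebra R S := ψ.toAlgebra
  have hRS : ∀ r : R, algebraMap R S r = ψ r := fun _ => rfl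
  let CK : Set K := {x : K | σK x = x}
  let E : Subfield k := constantsF σk
  have hinj : Function.Injective (algebraMap K S) := (algebraMap K S).injective
  obtain ⟨b, hbC, hbspan, hblin⟩ := exists_linearIndependent E CK
  let v : b → S := fun i => algebraMap K S i
  have hvσ : ∀ i, σS (v i) = v i := fun i => by
    show σS (algebraMap K S i) = _
    rw [hKS]; exact congrArg _ (hbC i.2)
  let lc := Finsupp.linearCombination R v
  have hlc : ∀ f : b →₀ R, lc f = ∑ i ∈ f.support, ψ (f i) * v i := by
    intro f
    simp only [lc, Finsupp.linearCombination_apply, Finsupp.sum, Algebra.smul_def, hRS]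
  have hlcσ : ∀ f : b →₀ R, lc (Finsupp.mapRange σR (map_zero σR) f) = σS (lc f) := by
    intro f
    simp only [lc, Finsupp.linearCombination_apply]
    rw [Finsupp.sum_mapRange_index (by simp), Finsupp.sum, Finsupp.sum, map_sum]
    refine Finset.sum_congr rfl fun i _ => ?_
    rw [Algebra.smul_def, Algebra.smul_def, map_mul, hvσ, hRS, hRS, hψ]
  -- vectors with constant coordinates
  have hconst : ∀ f : b →₀ R, (∀ i, σR (f i) = f i) →
      ∃ u : K, σK u = u ∧ lc f = algebraMap K S u ∧ (u = 0 → f = 0) := by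
    intro f hf
    choose c hcσ hcf using fun i => hc (f i) (hf i)
    refine ⟨∑ i ∈ f.support, algebraMap k K (c i) * (i : K), ?_, ?_, ?_⟩
    · rw [map_sum]
      refine Finset.sum_congr rfl fun i _ => ?_
      rw [map_mul, hkK, hcσ]
      congr 1
      exact hbC i.2
    · rw [hlc, map_sum]
      refine Finset.sum_congr rfl fun i _ => ?_
      rw [map_mul, ← hψk, hcf]
    · intro h0
      have := linearIndependent_iff'.mp hblin f.support (fun i => (⟨c i, hcσ i⟩ : E)) (by
        rw [← h0]
        refine Finset.sum_congr rfl fun i _ => ?_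
        show (c i) • (i : K) = _
        rw [Algebra.smul_def])
      ext i
      by_cases hi : i ∈ f.support
      · have h := congrArg Subtype.val (this i hi)
        have h' : c i = 0 := h
        rw [← hcf, h']; simp
      · simpa using hi
  -- the subring generated by R and C_K
  let T : Subalgebra R S := Algebra.adjoin R (algebraMap K S '' CK)
  have hTlc : ∀ t ∈ T, ∃ f, lc f = t := by
    intro t ht
    have h1 : t ∈ Submodule.span R (Submonoid.closure (algebraMap K S '' CK) : Set S) := by
      rw [← Algebra.adjoin_eq_span]; exact ht
    have h2 : (Submonoid.closure (algebraMap K S '' CK) : Set S) ⊆ algebraMap K S '' CK := by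
      let M : Submonoid S := ((constants σK).toSubmonoid).map (algebraMap K S)
      have : Submonoid.closure (algebraMap K S '' CK) ≤ M := by
        rw [Submonoid.closure_le]
        exact subset_rfl
      exact this
    have h3 : algebraMap K S '' CK ⊆ Submodule.span R (Set.range v) := by
      rintro _ ⟨x, hx, rfl⟩
      have hx' : x ∈ Submodule.span E b := by rw [hbspan]; exact Submodule.subset_span hx
      clear hx
      induction hx' using Submodule.span_induction with
      | mem x h => exact Submodule.subset_span ⟨⟨x, h⟩, rfl⟩
      | zero => simp
      | add x y _ _ hx hy => rw [map_add]; exact Submodule.add_mem _ hx hy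
      | smul a x _ hx =>
        have : algebraMap K S (a • x) = algebraMap k R a • algebraMap K S x := by
          rw [Algebra.smul_def (algebraMap k R a), hRS, hψk, ← map_mul, ← Algebra.smul_def]
          rfl
        rw [this]
        exact Submodule.smul_mem _ _ hx
    have h4 : t ∈ Submodule.span R (Set.range v) :=
      (Submodule.span_le.mpr (h2.trans h3)) h1
    exact (Finsupp.mem_span_range_iff_exists_finsupp.mp h4).imp fun f hf => by
      rw [← hf]; exact Finsupp.linearCombination_apply _ _
  have hψT : ∀ r, ψ r ∈ T := fun r => T.algebraMap_mem r
  have hDT : ∀ x ∈ Algebra.adjoin k CK, algebraMap K S x ∈ T := by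
    intro x hx
    induction hx using Algebra.adjoin_induction with
    | mem x h => exact Algebra.subset_adjoin ⟨x, h, rfl⟩
    | algebraMap a => rw [← hψk]; exact hψT _
    | add x y _ _ hx hy => rw [map_add]; exact T.add_mem hx hy
    | mul x y _ _ hx hy => rw [map_mul]; exact T.mul_mem hx hy
  have hden : ∀ s : S, ∃ d : K, d ≠ 0 ∧ algebraMap K S d ∈ T ∧ algebraMap K S d * s ∈ T := by
    intro s
    have hs' : s ∈ Submodule.span K (Set.range ψ) := by rw [hspan]; trivial
    induction hs' using Submodule.span_induction with
    | mem s h =>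
      obtain ⟨r, rfl⟩ := h
      exact ⟨1, one_ne_zero, by simp, by simpa using hψT r⟩
    | zero => exact ⟨1, one_ne_zero, by simp, by simp⟩
    | add x y _ _ hx hy =>
      obtain ⟨d, hd, hdT, hdx⟩ := hx
      obtain ⟨e, he, heT, hey⟩ := hy
      refine ⟨d * e, mul_ne_zero hd he, by rw [map_mul]; exact T.mul_mem hdT heT, ?_⟩
      have : algebraMap K S (d * e) * (x + y) = algebraMap K S e * (algebraMap K S d * x)
          + algebraMap K S d * (algebraMap K S e * y) := by rw [map_mul]; ring
      rw [this]
      exact T.add_mem (T.mul_mem heT hdx) (T.mul_mem hdT hey)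
    | smul a x _ hx =>
      obtain ⟨d, hd, hdT, hdx⟩ := hx
      have ha : a ∈ IntermediateField.adjoin k CK := by rw [hKgen]; trivial
      obtain ⟨p, hp, e, he, rfl⟩ := (IntermediateField.mem_adjoin_iff_div).mp ha
      by_cases he0 : e = 0
      · exact ⟨1, one_ne_zero, by simp, by simp [he0]⟩
      · refine ⟨d * e, mul_ne_zero hd he0, by
          rw [map_mul]; exact T.mul_mem hdT (hDT e he), ?_⟩
        have : algebraMap K S (d * e) * ((p / e) • x)
            = algebraMap K S p * (algebraMap K S d * x) := by
          rw [Algebra.smul_def, ← mul_assoc, ← mul_assoc, ← map_mul, ← map_mul]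
          congr 2
          field_simp
        rw [this]
        exact T.mul_mem (hDT p hp) hdx
  refine ⟨?_, ?_⟩
  · intro I hI
    by_contra! hcon
    obtain ⟨hI0, hI1⟩ := hcon
    apply hI0
    rw [eq_bot_iff]
    intro s hsI
    obtain ⟨d, hd, -, hdT⟩ := hden s
    obtain ⟨f, hf⟩ := hTlc _ hdT
    by_cases hf0 : f = 0
    · rw [hf0, map_zero] at hf
      have hu : IsUnit (algebraMap K S d) := (IsUnit.mk0 d hd).map _
      rw [Ideal.mem_bot]
      exact hu.mul_right_eq_zero.mp hf.symm
    · exfalso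
      let N : Submodule R (b →₀ R) := (I.restrictScalars R).comap lc
      obtain ⟨g, hgN, hg0, hgc⟩ := exists_const_vec σR hs N
        (fun g hg => by
          show lc _ ∈ I
          rw [hlcσ]; exact hI _ hg)
        ⟨f, by show lc f ∈ I; rw [hf]; exact I.mul_mem_left _ hsI, hf0⟩
      obtain ⟨u, -, hu, hu0⟩ := hconst g hgc
      have hgN' : lc g ∈ I := hgN
      rw [hu] at hgN'
      exact hI1 (I.eq_top_of_isUnit_mem hgN'
        ((IsUnit.mk0 u (fun h => hg0 (hu0 h))).map _))
  · intro s hsσ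
    obtain ⟨d, hd, hdT, hdsT⟩ := hden s
    obtain ⟨f, hf⟩ := hTlc _ hdsT
    obtain ⟨g, hg⟩ := hTlc _ hdT
    let π₁ : ((b ⊕ b) →₀ R) →ₗ[R] (b →₀ R) := Finsupp.lcomapDomain Sum.inl Sum.inl_injective
    let π₂ : ((b ⊕ b) →₀ R) →ₗ[R] (b →₀ R) := Finsupp.lcomapDomain Sum.inr Sum.inr_injective
    let N : Submodule R ((b ⊕ b) →₀ R) :=
      LinearMap.ker (lc.comp π₁ - s • (lc.comp π₂))
    have hmemN : ∀ h, h ∈ N ↔ lc (π₁ h) = s * lc (π₂ h) := by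
      intro h
      simp [N, LinearMap.mem_ker, sub_eq_zero]
    have hπ₁σ : ∀ h, π₁ (Finsupp.mapRange σR (map_zero σR) h)
        = Finsupp.mapRange σR (map_zero σR) (π₁ h) := by
      intro h; ext i; rfl
    have hπ₂σ : ∀ h, π₂ (Finsupp.mapRange σR (map_zero σR) h)
        = Finsupp.mapRange σR (map_zero σR) (π₂ h) := by
      intro h; ext i; rfl
    obtain ⟨h, hhN, hh0, hhc⟩ := exists_const_vec σR hs N
      (fun h hh => by
        rw [hmemN] at hh ⊢
        rw [hπ₁σ, hπ₂σ, hlcσ, hlcσ, hh, map_mul, hsσ])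
      ⟨Finsupp.sumElim f g, by
        have e1 : π₁ (Finsupp.sumElim f g) = f := by ext i; rfl
        have e2 : π₂ (Finsupp.sumElim f g) = g := by ext i; rfl
        rw [hmemN, e1, e2, hf, hg, mul_comm], by
        intro h0
        have e2 : π₂ (Finsupp.sumElim f g) = g := by ext i; rfl
        rw [h0, map_zero] at e2
        rw [← e2, map_zero] at hg
        exact hd (hinj (by rw [← hg, map_zero]))⟩
    obtain ⟨u, huσ, hu, hu0⟩ := hconst (π₁ h) (fun i => hhc (Sum.inl i))
    obtain ⟨w, hwσ, hw, hw0⟩ := hconst (π₂ h) (fun i => hhc (Sum.inr i))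
    rw [hmemN, hu, hw] at hhN
    have hwne : w ≠ 0 := by
      rintro rfl
      have hu' : u = 0 := hinj (by rw [hhN, map_zero, mul_zero])
      apply hh0
      ext i
      rcases i with i | i
      · exact DFunLike.congr_fun (hu0 hu') i
      · exact DFunLike.congr_fun (hw0 rfl) i
    refine ⟨u / w, by rw [map_div₀, huσ, hwσ], ?_⟩
    have hun : IsUnit (algebraMap K S w) := (IsUnit.mk0 w hwne).map _
    apply hun.mul_right_cancel
    rw [← hhN, ← map_mul, div_mul_cancel₀ _ hwne]

/-- The generic fundamental matrix of the generic ring. -/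
def genUnit (k : Type*) [CommRing k] (n : ℕ) : (Matrix (Fin n) (Fin n) (GenRing k n))ˣ :=
  Matrix.nonsingInvUnit
    ((algebraMap (MvPolynomial (Fin n × Fin n) k) (GenRing k n)).mapMatrix (genMat k n)) (by
      rw [← RingHom.map_det]
      exact IsLocalization.Away.algebraMap_isUnit _)

theorem genUnit_apply (k : Type*) [CommRing k] (n : ℕ) (i j : Fin n) :
    (genUnit k n).val i j = Yent k n i j := rfl

theorem det_mem_subalgebra {k W : Type*} [CommRing k] [CommRing W] [Algebra k W] {n : ℕ}
    (B : Subalgebra k W) (M : Matrix (Fin n) (Fin n) W) (hM : ∀ i j, M i j ∈ B) :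
    M.det ∈ B := by
  rw [Matrix.det_apply]
  refine B.sum_mem fun s _ => ?_
  rw [Units.smul_def]
  exact zsmul_mem (B.prod_mem fun i _ => hM _ _) _

theorem adjoin_genUnit (k : Type*) [CommRing k] (n : ℕ) :
    Algebra.adjoin k (entries (genUnit k n).val ∪
      entries (↑(genUnit k n)⁻¹ : Matrix (Fin n) (Fin n) (GenRing k n))) = ⊤ := by
  rw [eq_top_iff]
  set B := Algebra.adjoin k (entries (genUnit k n).val ∪
      entries (↑(genUnit k n)⁻¹ : Matrix (Fin n) (Fin n) (GenRing k n))) with hB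
  have hY : ∀ i j, (genUnit k n).val i j ∈ B := fun i j =>
    Algebra.subset_adjoin (Or.inl ⟨(i, j), rfl⟩)
  have hYi : ∀ i j, (↑(genUnit k n)⁻¹ : Matrix (Fin n) (Fin n) (GenRing k n)) i j ∈ B :=
    fun i j => Algebra.subset_adjoin (Or.inr ⟨(i, j), rfl⟩)
  have hpoly : ∀ p : MvPolynomial (Fin n × Fin n) k,
      algebraMap (MvPolynomial (Fin n × Fin n) k) (GenRing k n) p ∈ B := by
    intro p
    induction p using MvPolynomial.induction_on with
    | C a =>
      have : algebraMap (MvPolynomial (Fin n × Fin n) k) (GenRing k n) (MvPolynomial.C a)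
        = algebraMap k (GenRing k n) a := by
        rw [IsScalarTower.algebraMap_apply k (MvPolynomial (Fin n × Fin n) k) (GenRing k n)]
        rfl
      rw [this]
      exact B.algebraMap_mem a
    | add p q hp hq => rw [map_add]; exact B.add_mem hp hq
    | mul_X p i hp => rw [map_mul]; exact B.mul_mem hp (hY i.1 i.2)
  have hdet : algebraMap (MvPolynomial (Fin n × Fin n) k) (GenRing k n) (genMat k n).det
      = (genUnit k n).val.det := by
    rw [RingHom.map_det]; rfl
  have hdi : (↑(genUnit k n)⁻¹ : Matrix (Fin n) (Fin n) (GenRing k n)).det ∈ B := by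
    exact det_mem_subalgebra B _ hYi
  intro x _
  obtain ⟨m, p, hx⟩ := IsLocalization.Away.surj (genMat k n).det x
  have : x = algebraMap _ _ p *
      (↑(genUnit k n)⁻¹ : Matrix (Fin n) (Fin n) (GenRing k n)).det ^ m := by
    rw [← hx, hdet, mul_assoc, ← mul_pow, ← Matrix.det_mul, Units.mul_inv]
    simp
  rw [this]
  exact B.mul_mem (hpoly p) (B.pow_mem hdi m)

/-- Ring homs out of the generic ring agreeing on scalars and on `Y` are equal. -/
theorem genRing_hom_ext {k : Type*} [CommRing k] {n : ℕ} {B : Type*} [CommRing B]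
    (f g : GenRing k n →+* B)
    (h1 : ∀ a : k, f (algebraMap k (GenRing k n) a) = g (algebraMap k (GenRing k n) a))
    (h2 : ∀ i j, f (Yent k n i j) = g (Yent k n i j)) : f = g := by
  apply IsLocalization.ringHom_ext (Submonoid.powers (genMat k n).det)
  apply MvPolynomial.ringHom_ext
  · intro a
    have := h1 a
    rw [IsScalarTower.algebraMap_apply k (MvPolynomial (Fin n × Fin n) k) (GenRing k n)] at this
    exact this
  · intro i
    exact h2 i.1 i.2

/-- The extended ideal is proper as soon as the quotient maps to a nontrivial ring. -/
theorem map_ne_top_aux {k K W : Type*} [Field k] [Field K] [Algebra k K] {n : ℕ}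
    [CommRing W] [Nontrivial W] [Algebra K W]
    (φ : GenRing k n →+* GenRing K n)
    (hφk : ∀ x : k, φ (algebraMap k (GenRing k n) x) =
      algebraMap K (GenRing K n) (algebraMap k K x))
    (hφY : ∀ i j, φ (Yent k n i j) = Yent K n i j)
    (q : Ideal (GenRing k n)) (ι : GenRing k n →+* W)
    (hιk : ∀ a : k, ι (algebraMap k (GenRing k n) a) = algebraMap K W (algebraMap k K a))
    (hιq : ∀ x ∈ q, ι x = 0) : Ideal.map φ q ≠ ⊤ := by
  let θ₀ : MvPolynomial (Fin n × Fin n) K →+* W :=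
    MvPolynomial.eval₂Hom (algebraMap K W) (fun p => ι (Yent k n p.1 p.2))
  have hθdet : IsUnit (θ₀ (genMat K n).det) := by
    have : θ₀ (genMat K n).det = ι ((genUnit k n).val.det) := by
      rw [RingHom.map_det, RingHom.map_det]
      congr 1
      ext i j
      simp [θ₀, genMat, genUnit_apply]
    rw [this]
    exact ((Matrix.isUnit_iff_isUnit_det _).mp (genUnit k n).isUnit).map ι
  let θ : GenRing K n →+* W := IsLocalization.Away.lift (genMat K n).det hθdet
  have hθ : ∀ p, θ (algebraMap _ _ p) = θ₀ p := fun p => IsLocalization.Away.lift_eq _ hθdet p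
  have hcomp : θ.comp φ = ι := by
    apply genRing_hom_ext
    · intro a
      rw [RingHom.comp_apply, hφk,
        IsScalarTower.algebraMap_apply K (MvPolynomial (Fin n × Fin n) K) (GenRing K n), hθ, hιk]
      simp [θ₀, MvPolynomial.algebraMap_eq]
    · intro i j
      rw [RingHom.comp_apply, hφY, Yent, hθ]
      simp [θ₀, genMat]
  have hker : Ideal.map φ q ≤ RingHom.ker θ := by
    rw [Ideal.map_le_iff_le_comap]
    intro x hx
    show θ (φ x) = 0
    have := DFunLike.congr_fun hcomp x
    rw [RingHom.comp_apply] at this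
    rw [this]
    exact hιq x hx
  intro htop
  rw [htop] at hker
  have h1 : θ 1 = 0 := hker (x := (1 : GenRing K n)) trivial
  rw [map_one] at h1
  exact one_ne_zero h1

theorem map_ne_top {k K : Type*} [Field k] [Field K] [Algebra k K] {n : ℕ}
    (φ : GenRing k n →+* GenRing K n)
    (hφk : ∀ x : k, φ (algebraMap k (GenRing k n) x) =
      algebraMap K (GenRing K n) (algebraMap k K x))
    (hφY : ∀ i j, φ (Yent k n i j) = Yent K n i j)
    (q : Ideal (GenRing k n)) (hq : q ≠ ⊤) : Ideal.map φ q ≠ ⊤ := by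
  have : Nontrivial (GenRing k n ⧸ q) := Ideal.Quotient.nontrivial_iff.mpr hq
  let j : (GenRing k n ⧸ q) →ₐ[k] K ⊗[k] (GenRing k n ⧸ q) :=
    Algebra.TensorProduct.includeRight
  refine map_ne_top_aux (W := K ⊗[k] (GenRing k n ⧸ q)) φ hφk hφY q
    (j.toRingHom.comp (Ideal.Quotient.mk q)) ?_ ?_
  · intro a
    rw [← IsScalarTower.algebraMap_apply k K]
    exact j.commutes a
  · intro x hx
    show j (Ideal.Quotient.mk q x) = 0
    rw [Ideal.Quotient.eq_zero_iff_mem.mpr hx, map_zero]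

/-- If `R = k[Y, 1/det Y]/q` is a Picard-Vessiot ring over `k` with
`C_R = C_k`, where `q` is a maximal σ-ideal, and `K = k(C_K)` is a difference field
extension, then `S = K[Y, 1/det Y]/(q·K[Y, 1/det Y])` is a Picard-Vessiot ring over `K`
with `C_S = C_K`. -/
theorem statement_1 {k : Type} [Field k] [CharZero k] (σk : k ≃+* k)
    {K : Type} [Field K] [Algebra k K] (σK : K ≃+* K) (hkK : DiffCompat σk σK)
    (hKgen : IntermediateField.adjoin k {x : K | σK x = x} = ⊤)
    {n : ℕ} (A : (Matrix (Fin n) (Fin n) k)ˣ)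
    -- σ on the generic ring k[Y, 1/det Y], with σ(Y) = AY
    (σ₀ : GenRing k n ≃+* GenRing k n) (hσ₀ : DiffCompat σk σ₀)
    (hσ₀Y : ∀ i j, σ₀ (Yent k n i j) =
      ∑ l, algebraMap k (GenRing k n) (A.val i l) * Yent k n l j)
    -- σ on the generic ring K[Y, 1/det Y], with σ(Y) = AY
    (σ₁ : GenRing K n ≃+* GenRing K n) (hσ₁ : DiffCompat σK σ₁)
    (hσ₁Y : ∀ i j, σ₁ (Yent K n i j) =
      ∑ l, algebraMap K (GenRing K n) (algebraMap k K (A.val i l)) * Yent K n l j)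
    -- the canonical map k[Y, 1/det Y] → K[Y, 1/det Y]
    (φ : GenRing k n →+* GenRing K n)
    (hφk : ∀ x : k, φ (algebraMap k (GenRing k n) x) =
      algebraMap K (GenRing K n) (algebraMap k K x))
    (hφY : ∀ i j, φ (Yent k n i j) = Yent K n i j)
    -- q is a maximal σ-ideal of k[Y, 1/det Y]
    (q : Ideal (GenRing k n)) (hqσ : ∀ x ∈ q, σ₀ x ∈ q) (hqproper : q ≠ ⊤)
    (hqmax : ∀ q' : Ideal (GenRing k n), (∀ x ∈ q', σ₀ x ∈ q') → q ≤ q' → q' = ⊤ ∨ q' = q)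
    -- R = k[Y, 1/det Y]/q, a Picard-Vessiot ring over k with C_R = C_k
    (σR : (GenRing k n ⧸ q) ≃+* (GenRing k n ⧸ q))
    (hσR : ∀ x, σR (Ideal.Quotient.mk q x) = Ideal.Quotient.mk q (σ₀ x))
    (hRPV : IsPVRing σk σR A) (hRconst : ConstantsMatch σk σR)
    -- S = K[Y, 1/det Y]/(q·K[Y, 1/det Y])
    (σS : (GenRing K n ⧸ Ideal.map φ q) ≃+* (GenRing K n ⧸ Ideal.map φ q))
    (hσS : ∀ x, σS (Ideal.Quotient.mk (Ideal.map φ q) x) =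
      Ideal.Quotient.mk (Ideal.map φ q) (σ₁ x)) :
    IsPVRing σK σS (Units.map (algebraMap k K).mapMatrix.toMonoidHom A) ∧
    ConstantsMatch σK σS := by
  have hne : Ideal.map φ q ≠ ⊤ := map_ne_top φ hφk hφY q hqproper
  have : Nontrivial (GenRing K n ⧸ Ideal.map φ q) := Ideal.Quotient.nontrivial_iff.mpr hne
  obtain ⟨-, hsimple, -⟩ := hRPV
  let ψ : (GenRing k n ⧸ q) →+* (GenRing K n ⧸ Ideal.map φ q) :=
    Ideal.quotientMap (Ideal.map φ q) φ Ideal.le_comap_map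
  have hψmk : ∀ x, ψ (Ideal.Quotient.mk q x) = Ideal.Quotient.mk (Ideal.map φ q) (φ x) :=
    fun x => rfl
  have hKS : DiffCompat σK σS := by
    intro x
    show σS (Ideal.Quotient.mk _ (algebraMap K (GenRing K n) x)) = _
    rw [hσS, hσ₁]
    rfl
  have hφσ : σ₁.toRingHom.comp φ = φ.comp σ₀.toRingHom := by
    apply genRing_hom_ext
    · intro a
      show σ₁ (φ _) = φ (σ₀ _)
      rw [hφk, hσ₁, hσ₀, hφk, hkK]
    · intro i j
      show σ₁ (φ _) = φ (σ₀ _)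
      rw [hφY, hσ₁Y, hσ₀Y, map_sum]
      refine Finset.sum_congr rfl fun l _ => ?_
      rw [map_mul, hφk, hφY]
  have hψσ : ∀ r, σS (ψ r) = ψ (σR r) := by
    intro r
    obtain ⟨x, rfl⟩ := Ideal.Quotient.mk_surjective r
    rw [hψmk, hσS, hσR, hψmk]
    exact congrArg _ (DFunLike.congr_fun hφσ x)
  have hψk : ∀ a : k, ψ (algebraMap k _ a) = algebraMap K _ (algebraMap k K a) := by
    intro a
    show Ideal.Quotient.mk (Ideal.map φ q) (φ (algebraMap k (GenRing k n) a)) = _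
    rw [hφk]
    rfl
  let π : GenRing K n →ₐ[K] (GenRing K n ⧸ Ideal.map φ q) := Ideal.Quotient.mkₐ K _
  have hπ : Function.Surjective π := Ideal.Quotient.mk_surjective
  let Z : (Matrix (Fin n) (Fin n) (GenRing K n ⧸ Ideal.map φ q))ˣ :=
    Units.map π.toRingHom.mapMatrix.toMonoidHom (genUnit K n)
  have hZgen : Algebra.adjoin K (entries Z.val ∪
      entries (↑Z⁻¹ : Matrix (Fin n) (Fin n) (GenRing K n ⧸ Ideal.map φ q))) = ⊤ := by
    have h1 : entries Z.val ∪
        entries (↑Z⁻¹ : Matrix (Fin n) (Fin n) (GenRing K n ⧸ Ideal.map φ q)) =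
        π '' (entries (genUnit K n).val ∪
          entries (↑(genUnit K n)⁻¹ : Matrix (Fin n) (Fin n) (GenRing K n))) := by
      rw [Set.image_union]
      simp only [entries, ← Set.range_comp]
      rfl
    rw [h1, ← AlgHom.map_adjoin, adjoin_genUnit, Algebra.map_top]
    exact (AlgHom.range_eq_top π).mpr hπ
  have hspan : Submodule.span K (Set.range ψ) = ⊤ := by
    have hun : Units.map φ.mapMatrix.toMonoidHom (genUnit k n) = genUnit K n := by
      ext i j
      exact hφY i j
    have hsub : entries Z.val ∪
        entries (↑Z⁻¹ : Matrix (Fin n) (Fin n) (GenRing K n ⧸ Ideal.map φ q)) ⊆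
        Set.range ψ := by
      simp only [Z, ← hun]
      rintro _ (⟨p, rfl⟩ | ⟨p, rfl⟩)
      · exact ⟨Ideal.Quotient.mk q ((genUnit k n).val p.1 p.2), rfl⟩
      · exact ⟨Ideal.Quotient.mk q
          ((↑(genUnit k n)⁻¹ : Matrix (Fin n) (Fin n) (GenRing k n)) p.1 p.2), rfl⟩
    have h1 : Algebra.adjoin K (Set.range ψ) = ⊤ :=
      top_le_iff.mp (hZgen ▸ Algebra.adjoin_mono hsub)
    have h2 : (Submonoid.closure (Set.range ψ) : Set _) = Set.range ψ :=
      congrArg SetLike.coe (Submonoid.closure_eq (MonoidHom.mrange ψ.toMonoidHom))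
    rw [← h2, ← Algebra.adjoin_eq_span, h1]
    rfl
  obtain ⟨hsS, hcS⟩ := abstract_main σk σK σR σS hkK hKgen hKS ψ hψσ hψk hspan hsimple hRconst
  refine ⟨⟨hKS, hsS, Z, ?_, hZgen⟩, hcS⟩
  ext i j
  show σS (Ideal.Quotient.mk _ (Yent K n i j)) = _
  rw [hσS, hσ₁Y, map_sum, Matrix.mul_apply]
  refine Finset.sum_congr rfl fun l _ => ?_
  rw [map_mul]
  rfl

end PV
end
end

section
/- Let K be a difference field of characteristic zero with C_K = D_K, A ∈ GL_n(K), and let R' be a Picard-Vessiot ring for σ(X) = AX over K. Let R'' = K[V, 1/det(V)] be a difference ring extension of K generated over K by the entries of a matrix V ∈ GL_n(R'') with σ(V) = AV and by 1/det(V), and assume that R'' has no nonzero nilpotent elements and that the Krull dimension of R'' equals that of R'. Then R'' is a finite direct sum of Picard-Vessiot rings for σ(X) = AX over K: there exist finitely many pairwise comaximal σ-ideals I_1, …, I_r of R'' with I_1 ∩ ⋯ ∩ I_r = (0) such that R'' ≅ ⊕_{j=1}^r R''/I_j as difference rings and each R''/I_j is a Picard-Vessiot ring for σ(X) = AX over K.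 -/
open scoped TensorProduct

noncomputable section

namespace PV

set_option synthInstance.maxHeartbeats 1000000

/-! ### Krull dimension of integral extensions -/

theorem krullDim_of_integral {R S : Type*} [CommRing R] [CommRing S] [Algebra R S]
    [Algebra.IsIntegral R S] (hinj : Function.Injective (algebraMap R S)) :
    ringKrullDim S = ringKrullDim R := by
  apply le_antisymm
  · refine Order.krullDim_le_of_strictMono (PrimeSpectrum.comap (algebraMap R S)) ?_
    intro P Q h
    exact Ideal.IsIntegral.comap_lt_comap (R := R) (I := P.asIdeal) (J := Q.asIdeal) h
  · refine iSup_le fun l => ?_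
    obtain ⟨Q, _, hQ, hQ'⟩ := Ideal.exists_ideal_over_prime_of_isIntegral
      (S := S) (RelSeries.head l).asIdeal ⊥ (by
        intro x hx
        have : x = 0 := hinj (by simpa using hx)
        simp [this])
    have : Q.LiesOver (RelSeries.head l).asIdeal := ⟨hQ'.symm⟩
    obtain ⟨L, hL, -⟩ := Ideal.exists_ltSeries_of_hasGoingUp l Q
    rw [← hL]
    exact le_iSup (fun l : LTSeries (PrimeSpectrum S) => (l.length : WithBot ℕ∞)) L

/-! ### Linear disjointness of constants -/

theorem const_linIndep {C R T : Type*} [Field C] [CommRing R] [CommRing T] [Nontrivial R]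
    [Algebra C R] [Algebra R T] [Algebra C T] [IsScalarTower C R T]
    (σ : R ≃+* R) (σT : T →+* T) (hσ : IsSimpleDiff σ)
    (hC : ∀ r, σ r = r → ∃ c : C, algebraMap C R c = r)
    (hcomp : ∀ r, σT (algebraMap R T r) = algebraMap R T (σ r))
    {ι : Type*} (v : ι → T) (hv : ∀ i, σT (v i) = v i) (hli : LinearIndependent C v) :
    LinearIndependent R v := by
  classical
  rw [linearIndependent_iff']
  intro s
  have hσv : ∀ (s : Finset ι) (g : ι → R), σT (∑ i ∈ s, g i • v i) = ∑ i ∈ s, σ (g i) • v i := by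
    intro s g
    rw [map_sum]
    refine Finset.sum_congr rfl fun i _ => ?_
    rw [Algebra.smul_def, Algebra.smul_def, map_mul, hcomp, hv]
  induction s using Finset.induction_on with
  | empty => simp
  | insert a s ha ih =>
    let I : Ideal R :=
      { carrier := {r | ∃ g : ι → R, g a = r ∧ ∑ i ∈ insert a s, g i • v i = 0}
        add_mem' := by
          rintro x y ⟨g, rfl, hg⟩ ⟨h, rfl, hh⟩
          refine ⟨g + h, rfl, ?_⟩
          simp only [Pi.add_apply, add_smul, Finset.sum_add_distrib, hg, hh, add_zero]
        zero_mem' := ⟨0, rfl, by simp⟩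
        smul_mem' := by
          rintro c x ⟨g, rfl, hg⟩
          refine ⟨c • g, rfl, ?_⟩
          simp only [Pi.smul_apply, smul_assoc, ← Finset.smul_sum, hg, smul_zero] }
    have hI : ∀ x ∈ I, σ x ∈ I := by
      rintro x ⟨g, rfl, hg⟩
      refine ⟨fun i => σ (g i), rfl, ?_⟩
      rw [← hσv, hg, map_zero]
    intro g hg
    rcases hσ I hI with h | h
    · have h0 : g a = 0 := by
        have : g a ∈ I := ⟨g, rfl, hg⟩
        rw [h] at this
        simpa using this
      rw [Finset.sum_insert ha, h0, zero_smul, zero_add] at hg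
      intro i hi
      rcases Finset.mem_insert.1 hi with rfl | hi
      · exact h0
      · exact ih g hg i hi
    · exfalso
      obtain ⟨f, hf1, hf⟩ : (1 : R) ∈ I := by rw [h]; trivial
      have hf' := hσv (insert a s) f
      rw [hf, map_zero] at hf'
      have hd : ∑ i ∈ s, (σ (f i) - f i) • v i = 0 := by
        have : ∑ i ∈ insert a s, (σ (f i) - f i) • v i = 0 := by
          simp only [sub_smul, Finset.sum_sub_distrib, ← hf', hf, sub_zero]
        rwa [Finset.sum_insert ha, hf1, map_one, sub_self, zero_smul, zero_add] at this
      have hfix : ∀ i ∈ insert a s, ∃ c : C, algebraMap C R c = f i := by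
        intro i hi
        apply hC
        rcases Finset.mem_insert.1 hi with rfl | hi
        · rw [hf1, map_one]
        · exact sub_eq_zero.1 (ih _ hd i hi)
      choose! c hc using hfix
      have hcs : ∑ i ∈ insert a s, c i • v i = 0 := by
        rw [← hf]
        refine Finset.sum_congr rfl fun i hi => ?_
        rw [← hc i hi, algebraMap_smul]
      have := linearIndependent_iff'.1 hli _ c hcs a (Finset.mem_insert_self a s)
      have h1 := hc a (Finset.mem_insert_self a s)
      rw [this, map_zero, hf1] at h1
      exact zero_ne_one h1

/-- Constants in the `R`-span of an algebra of constants lie in that algebra. -/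
theorem const_mem_span {C R T : Type*} [Field C] [CommRing R] [CommRing T] [Nontrivial R]
    [Algebra C R] [Algebra R T] [Algebra C T] [IsScalarTower C R T]
    (σ : R ≃+* R) (σT : T →+* T) (hσ : IsSimpleDiff σ)
    (hC : ∀ r, σ r = r → ∃ c : C, algebraMap C R c = r)
    (hcomp : ∀ r, σT (algebraMap R T r) = algebraMap R T (σ r))
    (B : Submodule C T) (hB : ∀ b ∈ B, σT b = b) (x : T) (hx : σT x = x)
    (hxB : x ∈ Submodule.span R (B : Set T)) : x ∈ B := by
  by_contra hxn
  let b := Module.Basis.ofVectorSpace C B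
  let w : Module.Basis.ofVectorSpaceIndex C B → T := fun i => (b i : T)
  have hw : LinearIndependent C w := b.linearIndependent.map' B.subtype (by simp)
  have hspan : Submodule.span C (Set.range w) = B := by
    have h1 : Set.range w = B.subtype '' Set.range b := by
      rw [← Set.range_comp]; rfl
    rw [h1, Submodule.span_image, b.span_eq, Submodule.map_top, Submodule.range_subtype]
  have hli : LinearIndependent C (fun o : Option _ => o.casesOn' x w) := by
    rw [linearIndependent_option']
    exact ⟨hw, by rwa [hspan]⟩
  have := const_linIndep σ σT hσ hC hcomp _ (by
    rintro (_ | i)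
    · exact hx
    · exact hB _ (b i).2) hli
  have hnot := this.notMem_span_image (s := Set.range some) (x := none) (by simp)
  apply hnot
  have himg : (fun o : Option _ => o.casesOn' x w) '' Set.range some = Set.range w := by
    rw [← Set.range_comp]; rfl
  rw [himg]
  change x ∈ Submodule.span R (Set.range w)
  refine Submodule.span_le.2 ?_ hxB
  intro y hy
  have : y ∈ Submodule.span C (Set.range w) := by rw [hspan]; exact hy
  exact Submodule.span_le_restrictScalars C R _ this

theorem dim_core {C R T : Type*} [Field C] [CommRing R] [CommRing T] [Nontrivial R]
    [IsNoetherianRing R] [Nontrivial T]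
    [Algebra C R] [Algebra R T] [Algebra C T] [IsScalarTower C R T]
    (σ : R ≃+* R) (σT : T →+* T) (hσ : IsSimpleDiff σ)
    (hC : ∀ r, σ r = r ↔ ∃ c : C, algebraMap C R c = r)
    (hcomp : ∀ r, σT (algebraMap R T r) = algebraMap R T (σ r))
    (s : Set T) (hs : s.Finite) (hsc : ∀ x ∈ s, σT x = x) (htop : Algebra.adjoin R s = ⊤) :
    ∃ e : ℕ, ringKrullDim T = ringKrullDim R + e ∧
      ringKrullDim (RingHom.eqLocus σT (RingHom.id T)) = e := by
  let B := Algebra.adjoin C s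
  have hBc : ∀ b ∈ B, σT b = b := by
    intro b hb
    induction hb using Algebra.adjoin_induction with
    | mem x hx => exact hsc x hx
    | algebraMap c =>
      rw [IsScalarTower.algebraMap_apply C R T, hcomp, (hC _).2 ⟨c, rfl⟩]
    | add x y _ _ hx hy => rw [map_add, hx, hy]
    | mul x y _ _ hx hy => rw [map_mul, hx, hy]
  have hsB : s ⊆ B := Algebra.subset_adjoin
  have hspan : ∀ x : T, x ∈ Submodule.span R (B : Set T) := by
    intro x
    have hx : x ∈ Algebra.adjoin R s := by rw [htop]; trivial
    rw [← Subalgebra.mem_toSubmodule, Algebra.adjoin_eq_span] at hx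
    refine Submodule.span_mono ?_ hx
    intro y hy
    exact (Submonoid.closure_le (S := B.toSubmonoid)).2 hsB hy
  have hBmem : ∀ x, σT x = x → x ∈ B := fun x hx =>
    const_mem_span σ σT hσ (fun r => (hC r).1) hcomp (Subalgebra.toSubmodule B) hBc x hx (hspan x)
  have heq : RingHom.eqLocus σT (RingHom.id T) = B.toSubring := by
    ext x
    exact ⟨fun h => hBmem x h, fun h => hBc x h⟩
  have : Algebra.FiniteType C B :=
    (Subalgebra.fg_iff_finiteType B).1 (Subalgebra.fg_def.2 ⟨s, hs, rfl⟩)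
  obtain ⟨e, g, ginj, gint⟩ := exists_integral_inj_algHom_of_fg (k := C) (R := B)
  refine ⟨e, ?_, ?_⟩
  · let t : Fin e → T := fun i => (g (MvPolynomial.X i) : T)
    let h : MvPolynomial (Fin e) R →ₐ[R] T := MvPolynomial.aeval t
    let h0 : MvPolynomial (Fin e) C →ₐ[C] T := B.val.comp g
    have h0t : h0 = MvPolynomial.aeval t := by
      ext i; simp [h0, t]
    have h0inj : Function.Injective h0 := Subtype.val_injective.comp ginj
    have hli0 : LinearIndependent C (fun m : Fin e →₀ ℕ => h0 (MvPolynomial.monomial m 1)) := by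
      have := (MvPolynomial.basisMonomials (Fin e) C).linearIndependent.map' h0.toLinearMap
        (LinearMap.ker_eq_bot.2 h0inj)
      simpa [Function.comp_def] using this
    have hmon : ∀ m : Fin e →₀ ℕ, h0 (MvPolynomial.monomial m 1) = h (MvPolynomial.monomial m 1) := by
      intro m
      rw [h0t]
      simp [h, MvPolynomial.aeval_monomial]
    have hli : LinearIndependent R (fun m : Fin e →₀ ℕ => h (MvPolynomial.monomial m 1)) := by
      simp_rw [← hmon]
      exact const_linIndep σ σT hσ (fun r => (hC r).1) hcomp _ (fun m => hBc _ (g _).2) hli0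
    have hinj : Function.Injective h := by
      have hb : LinearIndependent R (h.toLinearMap ∘ (MvPolynomial.basisMonomials (Fin e) R)) := by
        simpa [Function.comp_def] using hli
      intro p q hpq
      rw [← sub_eq_zero] at hpq ⊢
      rw [← map_sub] at hpq
      set d := p - q
      have hd := (MvPolynomial.basisMonomials (Fin e) R).linearCombination_repr d
      rw [← hd, ← AlgHom.toLinearMap_apply, Finsupp.apply_linearCombination] at hpq
      have := linearIndependent_iff.1 hb _ hpq
      rw [← hd, this, map_zero]
    let _ := h.toRingHom.toAlgebra
    have hint : Algebra.IsIntegral (MvPolynomial (Fin e) R) T := by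
      constructor
      intro x
      have hx : x ∈ Algebra.adjoin R s := by rw [htop]; trivial
      induction hx using Algebra.adjoin_induction with
      | mem x hx =>
        obtain ⟨p, hp, hp0⟩ := gint ⟨x, hsB hx⟩
        refine ⟨p.map (MvPolynomial.map (algebraMap C R)), hp.map _, ?_⟩
        rw [Polynomial.eval₂_map]
        have h2 : (algebraMap (MvPolynomial (Fin e) R) T).comp
            (MvPolynomial.map (algebraMap C R)) = (B.val : B →+* T).comp (g : MvPolynomial (Fin e) C →+* B) := by
          have : (B.val : B →+* T).comp (g : MvPolynomial (Fin e) C →+* B) = (h0 : MvPolynomial (Fin e) C →+* T) := rfl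
          rw [this, h0t]
          apply MvPolynomial.ringHom_ext
          · intro c
            simp only [RingHom.comp_apply, MvPolynomial.map_C]
            change h (MvPolynomial.C _) = MvPolynomial.aeval t (MvPolynomial.C c)
            simp only [h, MvPolynomial.aeval_C, ← IsScalarTower.algebraMap_apply]
          · intro i
            simp only [RingHom.comp_apply, MvPolynomial.map_X]
            change h (MvPolynomial.X _) = MvPolynomial.aeval t (MvPolynomial.X i)
            simp only [h, MvPolynomial.aeval_X]
        rw [h2]
        have := congrArg (B.val : B →+* T) hp0
        rw [Polynomial.hom_eval₂, map_zero] at this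
        exact this
      | algebraMap r =>
        have : algebraMap R T r = algebraMap (MvPolynomial (Fin e) R) T (MvPolynomial.C r) := by
          change _ = h (MvPolynomial.C r)
          simp [h]
        rw [this]
        exact isIntegral_algebraMap
      | add x y _ _ hx hy => exact hx.add hy
      | mul x y _ _ hx hy => exact hx.mul hy
    rw [krullDim_of_integral (R := MvPolynomial (Fin e) R) (S := T) hinj,
      MvPolynomial.ringKrullDim_of_isNoetherianRing]
    simp
  · let _ := g.toRingHom.toAlgebra
    have : Algebra.IsIntegral (MvPolynomial (Fin e) C) B := ⟨gint⟩
    have h1 := krullDim_of_integral (R := MvPolynomial (Fin e) C) (S := B) ginj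
    rw [MvPolynomial.ringKrullDim_of_isNoetherianRing, ringKrullDim_eq_zero_of_field] at h1
    have h2 : ringKrullDim B = e := by simpa using h1
    rw [heq]
    exact h2

theorem dim_hom {R T : Type*} [CommRing R] [CommRing T] [Nontrivial R]
    [IsNoetherianRing R] [Nontrivial T]
    (σ : R ≃+* R) (σT : T →+* T) (hσ : IsSimpleDiff σ)
    (f : R →+* T) (hcomp : ∀ r, σT (f r) = f (σ r))
    (s : Set T) (hs : s.Finite) (hsc : ∀ x ∈ s, σT x = x)
    (htop : ∀ S : Subring T, (∀ r, f r ∈ S) → s ⊆ S → S = ⊤) :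
    ∃ e : ℕ, ringKrullDim T = ringKrullDim R + e ∧
      ringKrullDim (RingHom.eqLocus σT (RingHom.id T)) = e := by
  let _ := f.toAlgebra
  have hfield : IsField (constants σ) := by
    refine ⟨⟨0, 1, zero_ne_one⟩, mul_comm, ?_⟩
    rintro ⟨a, ha⟩ hne
    have ha0 : a ≠ 0 := fun h => hne (Subtype.ext h)
    have ha' : σ a = a := ha
    rcases hσ (Ideal.span {a}) (by
      intro x hx
      obtain ⟨y, rfl⟩ := Ideal.mem_span_singleton'.1 hx
      rw [map_mul, ha']
      exact Ideal.mem_span_singleton'.2 ⟨_, rfl⟩) with h | h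
    · exact absurd (Ideal.span_singleton_eq_bot.1 h) ha0
    · obtain ⟨b, hb⟩ := (Ideal.span_singleton_eq_top.1 h).exists_right_inv
      have hb' : σ b = b := by
        have h1 : a * σ b = 1 := by
          have := congrArg σ hb
          rwa [map_mul, ha', map_one] at this
        calc σ b = (a * b) * σ b := by rw [hb, one_mul]
          _ = (a * σ b) * b := by ring
          _ = b := by rw [h1, one_mul]
      exact ⟨⟨b, hb'⟩, Subtype.ext hb⟩
  let _ : Field (constants σ) := hfield.toField
  refine dim_core (C := constants σ) (R := R) (T := T) σ σT hσ ?_ hcomp s hs hsc ?_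
  · intro r
    exact ⟨fun h => ⟨⟨r, h⟩, rfl⟩, by rintro ⟨c, rfl⟩; exact c.2⟩
  · have := htop (Algebra.adjoin R s).toSubring
      (fun r => (Algebra.adjoin R s).algebraMap_mem r) Algebra.subset_adjoin
    rw [eq_top_iff]
    intro x _
    have hx : x ∈ (Algebra.adjoin R s).toSubring := by rw [this]; trivial
    exact hx

theorem entries_finite {R : Type*} {n : ℕ} (M : Matrix (Fin n) (Fin n) R) : (entries M).Finite :=
  Set.finite_range _

theorem noeth_of_gen {K R : Type*} [Field K] [CommRing R] [Algebra K R] {n : ℕ}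
    (Z : (Matrix (Fin n) (Fin n) R)ˣ)
    (hZ : Algebra.adjoin K (entries Z.val ∪ entries (↑Z⁻¹ : Matrix (Fin n) (Fin n) R)) = ⊤) :
    Algebra.FiniteType K R :=
  ⟨Subalgebra.fg_def.2 ⟨_, (entries_finite _).union (entries_finite _), hZ⟩⟩

/-- One half of the comparison of two Picard-Vessiot rings inside a common overring `T`. -/
theorem dim_pair {K R₁ R₂ T : Type*} [Field K] [CommRing R₁] [CommRing R₂] [CommRing T]
    [Algebra K R₁] [Algebra K R₂] [Nontrivial R₁] [Nontrivial T] {n : ℕ}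
    (A : (Matrix (Fin n) (Fin n) K)ˣ) (σ₁ : R₁ ≃+* R₁) (σ₂ : R₂ ≃+* R₂) (σT : T →+* T)
    (hs : IsSimpleDiff σ₁)
    (Z₁ : (Matrix (Fin n) (Fin n) R₁)ˣ) (hZ₁ : FundMatrix σ₁ A Z₁)
    (hg₁ : Algebra.adjoin K (entries Z₁.val ∪ entries (↑Z₁⁻¹ : Matrix (Fin n) (Fin n) R₁)) = ⊤)
    (Z₂ : (Matrix (Fin n) (Fin n) R₂)ˣ) (hZ₂ : FundMatrix σ₂ A Z₂)
    (hg₂ : Algebra.adjoin K (entries Z₂.val ∪ entries (↑Z₂⁻¹ : Matrix (Fin n) (Fin n) R₂)) = ⊤)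
    (f₁ : R₁ →+* T) (f₂ : R₂ →+* T)
    (hK : ∀ a : K, f₁ (algebraMap K R₁ a) = f₂ (algebraMap K R₂ a))
    (h₁ : ∀ r, σT (f₁ r) = f₁ (σ₁ r)) (h₂ : ∀ r, σT (f₂ r) = f₂ (σ₂ r))
    (hgen : ∀ S : Subring T, (∀ r, f₁ r ∈ S) → (∀ r, f₂ r ∈ S) → S = ⊤) :
    ∃ e : ℕ, ringKrullDim T = ringKrullDim R₁ + e ∧
      ringKrullDim (RingHom.eqLocus σT (RingHom.id T)) = e := by
  have := noeth_of_gen Z₁ hg₁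
  have : IsNoetherianRing R₁ := Algebra.FiniteType.isNoetherianRing K R₁
  let M₁ : (Matrix (Fin n) (Fin n) T)ˣ := Units.map (f₁.mapMatrix (m := Fin n)).toMonoidHom Z₁
  let M₂ : (Matrix (Fin n) (Fin n) T)ˣ := Units.map (f₂.mapMatrix (m := Fin n)).toMonoidHom Z₂
  let A' : (Matrix (Fin n) (Fin n) T)ˣ :=
    Units.map ((f₁.comp (algebraMap K R₁)).mapMatrix (m := Fin n)).toMonoidHom A
  let Sm : (Matrix (Fin n) (Fin n) T)ˣ →* (Matrix (Fin n) (Fin n) T)ˣ :=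
    Units.map (σT.mapMatrix (m := Fin n)).toMonoidHom
  have e₁ : Sm M₁ = A' * M₁ := by
    apply Units.ext
    ext i j
    have := congrArg f₁ (congrFun (congrFun hZ₁ i) j)
    simp only [Matrix.map_apply, Matrix.mul_apply, map_sum, map_mul] at this
    rw [Units.val_mul, Matrix.mul_apply]
    change σT (f₁ (Z₁.val i j)) = ∑ k, f₁ (algebraMap K R₁ (A.val i k)) * f₁ (Z₁.val k j)
    rw [h₁, this]
  have e₂ : Sm M₂ = A' * M₂ := by
    apply Units.ext
    ext i j
    have := congrArg f₂ (congrFun (congrFun hZ₂ i) j)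
    simp only [Matrix.map_apply, Matrix.mul_apply, map_sum, map_mul] at this
    rw [Units.val_mul, Matrix.mul_apply]
    change σT (f₂ (Z₂.val i j)) = ∑ k, f₁ (algebraMap K R₁ (A.val i k)) * f₂ (Z₂.val k j)
    simp only [hK]
    rw [h₂, this]
  let W := M₁⁻¹ * M₂
  have eW : Sm W = W := by
    simp only [W, map_mul, map_inv, e₁, e₂]
    group
  have eW' : Sm W⁻¹ = W⁻¹ := by rw [map_inv, eW]
  refine dim_hom σ₁ σT hs f₁ h₁ (entries W.val ∪ entries (↑W⁻¹ : Matrix (Fin n) (Fin n) T))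
    ((entries_finite _).union (entries_finite _)) ?_ ?_
  · rintro x (⟨⟨i, j⟩, rfl⟩ | ⟨⟨i, j⟩, rfl⟩)
    · exact congrArg (fun U : (Matrix (Fin n) (Fin n) T)ˣ => (U : Matrix (Fin n) (Fin n) T) i j) eW
    · exact congrArg (fun U : (Matrix (Fin n) (Fin n) T)ˣ => (U : Matrix (Fin n) (Fin n) T) i j) eW'
  · intro S hS1 hSs
    refine hgen S hS1 ?_
    have hW : ∀ i j, W.val i j ∈ S := fun i j => hSs (Or.inl ⟨(i, j), rfl⟩)
    have hW' : ∀ i j, (↑W⁻¹ : Matrix (Fin n) (Fin n) T) i j ∈ S :=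
      fun i j => hSs (Or.inr ⟨(i, j), rfl⟩)
    have k1 : M₂ = M₁ * W := by simp [W]
    have k2 : M₂⁻¹ = W⁻¹ * M₁⁻¹ := by simp [W]
    let S' : Subalgebra K R₂ :=
      { S.comap f₂ with
        algebraMap_mem' := fun a => by
          change f₂ (algebraMap K R₂ a) ∈ S
          rw [← hK]
          exact hS1 _ }
    have hS' : (⊤ : Subalgebra K R₂) ≤ S' := by
      rw [← hg₂]
      apply Algebra.adjoin_le
      rintro x (⟨⟨i, j⟩, rfl⟩ | ⟨⟨i, j⟩, rfl⟩)
      · change M₂.val i j ∈ S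
        rw [k1, Units.val_mul, Matrix.mul_apply]
        exact S.sum_mem fun k _ => S.mul_mem (hS1 _) (hW _ _)
      · change (↑M₂⁻¹ : Matrix (Fin n) (Fin n) T) i j ∈ S
        rw [k2, Units.val_mul, Matrix.mul_apply]
        exact S.sum_mem fun k _ => S.mul_mem (hW' _ _) (hS1 _)
    exact fun r => hS' (x := r) trivial

theorem exists_lift {K R₁ R₂ T : Type*} [Field K] [CommRing R₁] [CommRing R₂] [CommRing T]
    [Algebra K R₁] [Algebra K R₂] (f₁ : R₁ →+* T) (f₂ : R₂ →+* T)
    (hK : ∀ a : K, f₁ (algebraMap K R₁ a) = f₂ (algebraMap K R₂ a)) :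
    ∃ h : R₁ ⊗[K] R₂ →+* T, (∀ a, h (a ⊗ₜ 1) = f₁ a) ∧ (∀ b, h (1 ⊗ₜ b) = f₂ b) := by
  let _ : Algebra K T := (f₁.comp (algebraMap K R₁)).toAlgebra
  let g₁ : R₁ →ₐ[K] T := { f₁ with commutes' := fun _ => rfl }
  let g₂ : R₂ →ₐ[K] T := { f₂ with commutes' := fun a => (hK a).symm }
  refine ⟨(Algebra.TensorProduct.lift g₁ g₂ fun _ _ => Commute.all _ _).toRingHom, ?_, ?_⟩
  · intro a
    change Algebra.TensorProduct.lift g₁ g₂ _ (a ⊗ₜ 1) = _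
    rw [Algebra.TensorProduct.lift_tmul, map_one, mul_one]
    rfl
  · intro a
    change Algebra.TensorProduct.lift g₁ g₂ _ (1 ⊗ₜ a) = _
    rw [Algebra.TensorProduct.lift_tmul, map_one, one_mul]
    rfl

/-- All Picard-Vessiot rings of the same equation have the same Krull dimension. -/
theorem dim_eq_of_PV {K R₁ R₂ : Type*} [Field K] [CommRing R₁] [CommRing R₂]
    [Algebra K R₁] [Algebra K R₂] [Nontrivial R₁] [Nontrivial R₂] {n : ℕ}
    (A : (Matrix (Fin n) (Fin n) K)ˣ) (σK : K ≃+* K) (σ₁ : R₁ ≃+* R₁) (σ₂ : R₂ ≃+* R₂)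
    (h₁ : IsPVRing σK σ₁ A) (h₂ : IsPVRing σK σ₂ A) : ringKrullDim R₁ = ringKrullDim R₂ := by
  obtain ⟨hc₁, hs₁, Z₁, hZ₁, hg₁⟩ := h₁
  obtain ⟨hc₂, hs₂, Z₂, hZ₂, hg₂⟩ := h₂
  let i₁ : R₁ →+* R₁ ⊗[K] R₂ :=
    (Algebra.TensorProduct.includeLeft : R₁ →ₐ[K] R₁ ⊗[K] R₂).toRingHom
  let i₂ : R₂ →+* R₁ ⊗[K] R₂ :=
    (Algebra.TensorProduct.includeRight : R₂ →ₐ[K] R₁ ⊗[K] R₂).toRingHom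
  have hK : ∀ a : K, i₁ (algebraMap K R₁ a) = i₂ (algebraMap K R₂ a) := by
    intro a
    change (Algebra.TensorProduct.includeLeft : R₁ →ₐ[K] R₁ ⊗[K] R₂) (algebraMap K R₁ a) =
      (Algebra.TensorProduct.includeRight : R₂ →ₐ[K] R₁ ⊗[K] R₂) (algebraMap K R₂ a)
    rw [AlgHom.commutes, AlgHom.commutes]
  obtain ⟨σT, hl, hr⟩ := exists_lift (K := K) (i₁.comp (σ₁ : R₁ →+* R₁)) (i₂.comp (σ₂ : R₂ →+* R₂))
    (by
      intro a
      change i₁ (σ₁ _) = i₂ (σ₂ _)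
      rw [hc₁, hc₂, hK])
  have hgen : ∀ S : Subring (R₁ ⊗[K] R₂), (∀ r, i₁ r ∈ S) → (∀ r, i₂ r ∈ S) → S = ⊤ := by
    intro S a b
    rw [eq_top_iff]
    intro x _
    induction x using TensorProduct.induction_on with
    | zero => exact S.zero_mem
    | tmul x y =>
      have : x ⊗ₜ[K] y = i₁ x * i₂ y := by
        change _ = (x ⊗ₜ[K] (1 : R₂)) * ((1 : R₁) ⊗ₜ[K] y)
        simp
      rw [this]
      exact S.mul_mem (a x) (b y)
    | add x y hx hy => exact S.add_mem (hx trivial) (hy trivial)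
  obtain ⟨e, he, he'⟩ := dim_pair A σ₁ σ₂ σT hs₁ Z₁ hZ₁ hg₁ Z₂ hZ₂ hg₂ i₁ i₂ hK hl hr hgen
  obtain ⟨d, hd, hd'⟩ := dim_pair A σ₂ σ₁ σT hs₂ Z₂ hZ₂ hg₂ Z₁ hZ₁ hg₁ i₂ i₁
    (fun a => (hK a).symm) hr hl (fun S a b => hgen S b a)
  have hed : e = d := by
    rw [he'] at hd'
    exact_mod_cast hd'
  subst hed
  rw [he] at hd
  exact ENat.WithBot.add_natCast_cancel.1 hd

/-! ### Maximal σ-ideals -/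

/-- `m` is a maximal σ-ideal. -/
def IsMaxStable {R : Type*} [CommRing R] (σ : R ≃+* R) (m : Ideal R) : Prop :=
  (∀ x ∈ m, σ x ∈ m) ∧ m ≠ ⊤ ∧ ∀ J : Ideal R, (∀ x ∈ J, σ x ∈ J) → m ≤ J → J ≠ ⊤ → J = m

theorem exists_maxStable {R : Type*} [CommRing R] [IsNoetherianRing R] (σ : R ≃+* R)
    (I : Ideal R) (hI : ∀ x ∈ I, σ x ∈ I) (hI' : I ≠ ⊤) : ∃ m, IsMaxStable σ m ∧ I ≤ m := by
  obtain ⟨m, ⟨hm1, hm2, hm3⟩, hm⟩ := set_has_maximal_iff_noetherian.2 ‹IsNoetherianRing R›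
    {J : Ideal R | (∀ x ∈ J, σ x ∈ J) ∧ J ≠ ⊤ ∧ I ≤ J} ⟨I, hI, hI', le_rfl⟩
  refine ⟨m, ⟨hm1, hm2, fun J hJ hmJ hJt => ?_⟩, hm3⟩
  by_contra hne
  exact hm J ⟨hJ, hJt, hm3.trans hmJ⟩ (lt_of_le_of_ne hmJ (Ne.symm hne))

theorem IsMaxStable.comap_eq {R : Type*} [CommRing R] {σ : R ≃+* R} {m : Ideal R}
    (hm : IsMaxStable σ m) : m.comap (σ : R →+* R) = m := by
  obtain ⟨h1, h2, h3⟩ := hm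
  refine h3 _ (fun x hx => h1 _ hx) h1 ?_
  intro h
  apply h2
  rw [Ideal.eq_top_iff_one] at h ⊢
  simpa using h

theorem IsMaxStable.mem_iff {R : Type*} [CommRing R] {σ : R ≃+* R} {m : Ideal R}
    (hm : IsMaxStable σ m) (x : R) : σ x ∈ m ↔ x ∈ m :=
  ⟨fun h => by rw [← hm.comap_eq]; exact h, hm.1 x⟩

/-- The quotient by a maximal σ-ideal is a Picard-Vessiot ring. -/
theorem IsMaxStable.isPV {K R : Type*} [Field K] [CommRing R] [Algebra K R] {n : ℕ}
    {σ : R ≃+* R} {m : Ideal R} (hm : IsMaxStable σ m) (σK : K ≃+* K) (hc : DiffCompat σK σ)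
    (A : (Matrix (Fin n) (Fin n) K)ˣ) (V : (Matrix (Fin n) (Fin n) R)ˣ) (hV : FundMatrix σ A V)
    (hgen : Algebra.adjoin K
      (entries V.val ∪ entries (↑V⁻¹ : Matrix (Fin n) (Fin n) R)) = ⊤) :
    ∃ σj : (R ⧸ m) ≃+* (R ⧸ m),
        (∀ x, σj (Ideal.Quotient.mk m x) = Ideal.Quotient.mk m (σ x)) ∧
        IsPVRing σK σj A := by
  let σj : (R ⧸ m) ≃+* (R ⧸ m) := Ideal.quotientEquiv m m σ (by
    ext x
    rw [Ideal.mem_map_iff_of_surjective (σ : R →+* R) σ.surjective]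
    constructor
    · intro hx
      refine ⟨σ.symm x, ?_, by simp⟩
      rw [← hm.mem_iff]; simpa using hx
    · rintro ⟨y, hy, rfl⟩
      exact hm.1 y hy)
  have hσj : ∀ x, σj (Ideal.Quotient.mk m x) = Ideal.Quotient.mk m (σ x) := fun x => rfl
  refine ⟨σj, hσj, ?_, ?_, ?_⟩
  · intro a
    change σj (Ideal.Quotient.mk m (algebraMap K R a)) = _
    rw [hσj, hc]
    rfl
  · intro I hI
    by_cases htop : I = ⊤
    · exact Or.inr htop
    left
    have := hm.2.2 (I.comap (Ideal.Quotient.mk m)) (by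
      intro x hx
      change Ideal.Quotient.mk m (σ x) ∈ I
      rw [← hσj]
      exact hI _ hx) (by
      intro x hx
      change Ideal.Quotient.mk m x ∈ I
      rw [Ideal.Quotient.eq_zero_iff_mem.2 hx]
      exact I.zero_mem) (by
      intro h
      apply htop
      rw [Ideal.eq_top_iff_one] at h ⊢
      simpa using h)
    rw [eq_bot_iff]
    intro x hx
    obtain ⟨y, rfl⟩ := Ideal.Quotient.mk_surjective x
    have hy : y ∈ m := by rw [← this]; exact hx
    exact Ideal.Quotient.eq_zero_iff_mem.2 hy
  · let Z : (Matrix (Fin n) (Fin n) (R ⧸ m))ˣ :=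
      Units.map ((Ideal.Quotient.mk m).mapMatrix (m := Fin n)).toMonoidHom V
    refine ⟨Z, ?_, ?_⟩
    · unfold FundMatrix
      ext i j
      have := congrArg (Ideal.Quotient.mk m) (congrFun (congrFun hV i) j)
      simp only [Matrix.map_apply, Matrix.mul_apply, map_sum, map_mul] at this
      simp only [Matrix.map_apply, Matrix.mul_apply]
      exact this
    · have h1 : entries Z.val ∪ entries (↑Z⁻¹ : Matrix (Fin n) (Fin n) (R ⧸ m)) =
          (Ideal.Quotient.mkₐ K m) ''
            (entries V.val ∪ entries (↑V⁻¹ : Matrix (Fin n) (Fin n) R)) := by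
        rw [Set.image_union]
        unfold entries
        rw [← Set.range_comp, ← Set.range_comp]
        rfl
      rw [h1, ← AlgHom.map_adjoin, hgen, Algebra.map_top, AlgHom.range_eq_top]
      exact Ideal.Quotient.mkₐ_surjective K m

/-- A quotient of full (finite) dimension sees a minimal prime. -/
theorem exists_minimalPrime {R : Type*} [CommRing R] (m : Ideal R) (d : ℕ)
    (hd : ringKrullDim R = d) (hm : ringKrullDim (R ⧸ m) = d) :
    ∃ P ∈ minimalPrimes R, m ≤ P := by
  obtain ⟨l, hl⟩ := Order.le_krullDim_iff.1 (le_of_eq hm.symm)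
  have hmono : StrictMono (PrimeSpectrum.comap (Ideal.Quotient.mk m)) := by
    intro P Q h
    refine lt_of_le_of_ne (Ideal.comap_mono (le_of_lt h)) ?_
    intro he
    exact h.ne (PrimeSpectrum.comap_injective_of_surjective _ Ideal.Quotient.mk_surjective he)
  let L := l.map _ hmono
  have hP := L.head.isPrime
  refine ⟨L.head.asIdeal, ⟨⟨hP, bot_le⟩, ?_⟩, ?_⟩
  · rintro q ⟨hq, -⟩ hle
    by_contra hne
    have hlt : (⟨q, hq⟩ : PrimeSpectrum R) < L.head := lt_of_le_not_ge hle hne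
    have h1 := le_iSup (fun l : LTSeries (PrimeSpectrum R) => (l.length : WithBot ℕ∞))
      (L.cons ⟨q, hq⟩ hlt)
    change _ ≤ ringKrullDim R at h1
    rw [hd] at h1
    have h2 : (L.cons ⟨q, hq⟩ hlt).length ≤ d := by exact_mod_cast h1
    have h3 : (L.cons ⟨q, hq⟩ hlt).length = l.length + 1 := RelSeries.cons_length _ _ _
    omega
  · intro x hx
    change Ideal.Quotient.mk m x ∈ l.head.asIdeal
    rw [Ideal.Quotient.eq_zero_iff_mem.2 hx]
    exact Ideal.zero_mem _

/-- The largest σ-ideal inside `P`. -/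
def core {R : Type*} [CommRing R] (σ : R ≃+* R) (P : Ideal R) : Ideal R where
  carrier := {x | ∀ k : ℕ, (⇑σ)^[k] x ∈ P}
  add_mem' := fun ha hb k => by rw [iter_add]; exact P.add_mem (ha k) (hb k)
  zero_mem' := fun k => by
    have : (⇑σ)^[k] 0 = 0 := Function.iterate_fixed (map_zero σ) k
    rw [this]; exact P.zero_mem
  smul_mem' := fun c x hx k => by
    rw [smul_eq_mul, iter_mul]; exact P.mul_mem_left _ (hx k)

theorem core_stable {R : Type*} [CommRing R] (σ : R ≃+* R) (P : Ideal R) :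
    ∀ x ∈ core σ P, σ x ∈ core σ P := fun x hx k => by
  have := hx (k + 1)
  rwa [Function.iterate_succ_apply] at this

theorem core_le {R : Type*} [CommRing R] (σ : R ≃+* R) (P : Ideal R) : core σ P ≤ P :=
  fun _ hx => hx 0

theorem le_core {R : Type*} [CommRing R] (σ : R ≃+* R) (P I : Ideal R)
    (hI : ∀ x ∈ I, σ x ∈ I) (hle : I ≤ P) : I ≤ core σ P := by
  intro x hx k
  apply hle
  induction k with
  | zero => exact hx
  | succ k ih => rw [Function.iterate_succ_apply']; exact hI _ ih

theorem IsMaxStable.eq_core {R : Type*} [CommRing R] {σ : R ≃+* R} {m P : Ideal R}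
    (hm : IsMaxStable σ m) (hP : P ≠ ⊤) (hle : m ≤ P) : core σ P = m := by
  refine hm.2.2 _ (core_stable σ P) (le_core σ P m hm.1 hle) ?_
  intro h
  exact hP (top_le_iff.1 (h ▸ core_le σ P))

theorem minimalPrimes_comap {R : Type*} [CommRing R] (σ : R ≃+* R) (Q : Ideal R)
    (hQ : Q ∈ minimalPrimes R) : Q.comap (σ : R →+* R) ∈ minimalPrimes R := by
  obtain ⟨⟨hp, -⟩, hmin⟩ := hQ
  refine ⟨⟨Ideal.comap_isPrime _ _, bot_le⟩, ?_⟩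
  rintro q ⟨hq, -⟩ hle x hx
  have h1 := hmin (y := q.comap (σ.symm : R →+* R)) ⟨Ideal.comap_isPrime _ _, bot_le⟩ (by
    intro y hy
    have hy' : σ.symm y ∈ q := hy
    have : σ (σ.symm y) ∈ Q := hle hy'
    simpa using this)
  have hx' : σ x ∈ Q := hx
  have : σ.symm (σ x) ∈ q := h1 hx'
  simpa using this

/-- If every maximal σ-ideal lies in a minimal prime, then every minimal prime contains a maximal
σ-ideal. -/
theorem exists_max_le {R : Type*} [CommRing R] [IsNoetherianRing R] (σ : R ≃+* R)
    (hmin : ∀ m, IsMaxStable σ m → ∃ P ∈ minimalPrimes R, m ≤ P)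
    (Q : Ideal R) (hQ : Q ∈ minimalPrimes R) : ∃ m, IsMaxStable σ m ∧ m ≤ Q := by
  have hQp : Q.IsPrime := hQ.1.1
  obtain ⟨m, hm, hle⟩ := exists_maxStable σ (core σ Q) (core_stable σ Q) (fun h =>
    hQp.ne_top (top_le_iff.1 (h ▸ core_le σ Q)))
  refine ⟨m, hm, ?_⟩
  obtain ⟨P, hP, hmP⟩ := hmin m hm
  have hPp : P.IsPrime := hP.1.1
  let q : ℕ → Ideal R := fun k => (Ideal.comap (σ : R →+* R))^[k] Q
  have hq : ∀ k, q k ∈ minimalPrimes R := by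
    intro k
    induction k with
    | zero => exact hQ
    | succ k ih =>
      simp only [q, Function.iterate_succ_apply']
      exact minimalPrimes_comap σ _ ih
  have hqmem : ∀ k x, x ∈ q k ↔ (⇑σ)^[k] x ∈ Q := by
    intro k
    induction k with
    | zero => intro x; rfl
    | succ k ih =>
      intro x
      simp only [q, Function.iterate_succ_apply']
      rw [← Function.iterate_succ_apply' (⇑σ), Function.iterate_succ_apply]
      exact ih (σ x)
  have hfin : (Set.range q).Finite :=
    (minimalPrimes.finite_of_isNoetherianRing R).subset (by rintro _ ⟨k, rfl⟩; exact hq k)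
  have hinf : hfin.toFinset.inf id ≤ P := by
    refine le_trans ?_ (hle.trans hmP)
    intro x hx k
    rw [← hqmem]
    have : hfin.toFinset.inf id ≤ q k := Finset.inf_le (f := id) (hfin.mem_toFinset.2 ⟨k, rfl⟩)
    exact this hx
  obtain ⟨p, hp, hpP⟩ := (Ideal.IsPrime.inf_le' hPp).1 hinf
  obtain ⟨k, rfl⟩ : ∃ k, q k = p := hfin.mem_toFinset.1 hp
  have hPq : P ≤ q k := hP.2 (hq k).1 hpP
  intro x hx
  have hy : ∀ k : ℕ, ∀ x ∈ m, ∃ y ∈ m, (⇑σ)^[k] y = x := by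
    intro k
    induction k with
    | zero => intro x hx; exact ⟨x, hx, rfl⟩
    | succ k ih =>
      intro x hx
      obtain ⟨y, hy, hyx⟩ := ih x hx
      refine ⟨σ.symm y, ?_, ?_⟩
      · rw [← hm.mem_iff]; simpa using hy
      · rw [Function.iterate_succ_apply]; simpa using hyx
  obtain ⟨y, hy, rfl⟩ := hy k x hx
  exact (hqmem k y).1 (hPq (hmP hy))

/-- If `C_K = D_K`, `R'` is a Picard-Vessiot ring for `σ(X) = AX` over `K`,
and `R'' = K[V, 1/det V]` is a reduced difference ring extension with
`Kr.dim R'' = Kr.dim R'`, then `R''` is a finite direct sum of Picard-Vessiot rings. -/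
theorem statement_10 {K : Type} [Field K] [CharZero K] (σK : K ≃+* K)
    (hCD : ∀ a : K, (∃ m, 0 < m ∧ (⇑σK)^[m] a = a) → σK a = a)
    {n : ℕ} (A : (Matrix (Fin n) (Fin n) K)ˣ)
    {R' : Type} [CommRing R'] [Algebra K R'] (σ' : R' ≃+* R')
    (hPV : IsPVRing σK σ' A)
    {R'' : Type} [CommRing R''] [Algebra K R''] [IsReduced R''] (σ'' : R'' ≃+* R'')
    (hcompat : DiffCompat σK σ'')
    (V : (Matrix (Fin n) (Fin n) R'')ˣ) (hV : FundMatrix σ'' A V)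
    (hgen : Algebra.adjoin K
      (entries V.val ∪ entries (↑V⁻¹ : Matrix (Fin n) (Fin n) R'')) = ⊤)
    (hdim : ringKrullDim R'' = ringKrullDim R') :
    ∃ (r : ℕ) (_ : 0 < r) (I : Fin r → Ideal R''),
      -- each I_j is a σ-ideal
      (∀ j, ∀ x ∈ I j, σ'' x ∈ I j) ∧
      -- pairwise comaximal
      (Pairwise fun j j' => I j ⊔ I j' = ⊤) ∧
      -- with zero intersection
      (⨅ j, I j) = ⊥ ∧
      -- so that R'' ≅ ⊕_j R''/I_j (as rings, via the canonical map)
      Function.Bijective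
        (fun (x : R'') (j : Fin r) => Ideal.Quotient.mk (I j) x) ∧
      -- and each R''/I_j, with the induced σ, is a Picard-Vessiot ring over K
      (∀ j, ∃ σj : (R'' ⧸ I j) ≃+* (R'' ⧸ I j),
        (∀ x, σj (Ideal.Quotient.mk (I j) x) = Ideal.Quotient.mk (I j) (σ'' x)) ∧
        IsPVRing σK σj A) := by
  classical
  obtain hsub | hnt := subsingleton_or_nontrivial R''
  · refine ⟨1, one_pos, fun _ => ⊥, ?_, ?_, ?_, ?_, ?_⟩
    · intro _ x _
      rw [Subsingleton.elim (σ'' x) 0]; exact Ideal.zero_mem _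
    · intro j j' h
      exact absurd (Subsingleton.elim j j') h
    · exact Subsingleton.elim _ _
    · have : Subsingleton (R'' ⧸ (⊥ : Ideal R'')) := Ideal.Quotient.mk_surjective.subsingleton
      exact ⟨fun _ _ _ => Subsingleton.elim _ _, fun y => ⟨0, Subsingleton.elim _ _⟩⟩
    · intro j
      have hsq : Subsingleton (R'' ⧸ (⊥ : Ideal R'')) := Ideal.Quotient.mk_surjective.subsingleton
      have hsm : Subsingleton (Matrix (Fin n) (Fin n) (R'' ⧸ (⊥ : Ideal R''))) :=
        ⟨fun a b => by ext i j; exact Subsingleton.elim _ _⟩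
      exact ⟨RingEquiv.refl _, fun _ => Subsingleton.elim _ _, fun _ => Subsingleton.elim _ _,
        fun I _ => Or.inl (Subsingleton.elim _ _), 1, Subsingleton.elim _ _,
        by ext x; simp [Subsingleton.elim x 0]⟩
  have hft : Algebra.FiniteType K R'' := noeth_of_gen V hgen
  have hN : IsNoetherianRing R'' := Algebra.FiniteType.isNoetherianRing K R''
  have hnt' : Nontrivial R' := by
    by_contra h
    rw [not_nontrivial_iff_subsingleton] at h
    rw [ringKrullDim_eq_bot_of_subsingleton (R := R')] at hdim
    have h0 := ringKrullDim_nonneg_of_nontrivial (R := R'')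
    rw [hdim] at h0
    simp at h0
  obtain ⟨d, hd⟩ : ∃ d : ℕ, ringKrullDim R'' = d := by
    obtain ⟨e, g, ginj, gint⟩ := exists_integral_inj_algHom_of_fg (k := K) (R := R'')
    let _ := g.toRingHom.toAlgebra
    have : Algebra.IsIntegral (MvPolynomial (Fin e) K) R'' := ⟨gint⟩
    have h1 := krullDim_of_integral (R := MvPolynomial (Fin e) K) (S := R'') ginj
    rw [MvPolynomial.ringKrullDim_of_isNoetherianRing, ringKrullDim_eq_zero_of_field] at h1
    exact ⟨e, by simpa using h1⟩
  have hPVq : ∀ m, IsMaxStable σ'' m → ∃ σj : (R'' ⧸ m) ≃+* (R'' ⧸ m),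
      (∀ x, σj (Ideal.Quotient.mk m x) = Ideal.Quotient.mk m (σ'' x)) ∧ IsPVRing σK σj A :=
    fun m hm => hm.isPV σK hcompat A V hV hgen
  have hmin : ∀ m, IsMaxStable σ'' m → ∃ P ∈ minimalPrimes R'', m ≤ P := by
    intro m hm
    obtain ⟨σj, -, hj⟩ := hPVq m hm
    have : Nontrivial (R'' ⧸ m) := Ideal.Quotient.nontrivial_iff.2 hm.2.1
    refine exists_minimalPrime m d hd ?_
    rw [dim_eq_of_PV A σK σj σ' hj hPV, ← hdim, hd]
  have hfin : {m : Ideal R'' | IsMaxStable σ'' m}.Finite := by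
    refine ((minimalPrimes.finite_of_isNoetherianRing R'').image (core σ'')).subset ?_
    intro m hm
    obtain ⟨P, hP, hle⟩ := hmin m hm
    exact ⟨P, hP, IsMaxStable.eq_core hm hP.1.1.ne_top hle⟩
  obtain ⟨m₀, hm₀, -⟩ := exists_maxStable σ'' ⊥ (by simp) bot_ne_top
  have hFin := hfin.to_subtype
  let r := Nat.card {m : Ideal R'' | IsMaxStable σ'' m}
  let E : Fin r ≃ {m : Ideal R'' | IsMaxStable σ'' m} := (Finite.equivFin _).symm
  have hI : ∀ j, IsMaxStable σ'' (E j).1 := fun j => (E j).2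
  have hco : Pairwise fun j j' => (E j).1 ⊔ (E j').1 = ⊤ := by
    intro j j' hne
    by_contra htop
    have hst : ∀ x ∈ (E j).1 ⊔ (E j').1, σ'' x ∈ (E j).1 ⊔ (E j').1 := by
      intro x hx
      obtain ⟨y, hy, z, hz, rfl⟩ := Submodule.mem_sup.1 hx
      rw [map_add]
      exact Ideal.add_mem _ (Ideal.mem_sup_left ((hI j).1 y hy))
        (Ideal.mem_sup_right ((hI j').1 z hz))
    have h1 := (hI j).2.2 _ hst le_sup_left htop
    have h2 := (hI j').2.2 _ hst le_sup_right htop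
    exact hne (E.injective (Subtype.ext (h1.symm.trans h2)))
  have hinf : (⨅ j, (E j).1) = ⊥ := by
    rw [eq_bot_iff]
    intro x hx
    have hx' : x ∈ sInf (⊥ : Ideal R'').minimalPrimes := by
      rw [Submodule.mem_sInf]
      intro Q hQ
      obtain ⟨m, hm, hle⟩ := exists_max_le σ'' hmin Q hQ
      apply hle
      have := (Submodule.mem_iInf _).1 hx (E.symm ⟨m, hm⟩)
      simpa using this
    rw [Ideal.sInf_minimalPrimes] at hx'
    have : (⊥ : Ideal R'').radical = ⊥ := nilradical_eq_zero R''
    rwa [this] at hx'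
  refine ⟨r, Fin.pos_iff_nonempty.2 ⟨E.symm ⟨m₀, hm₀⟩⟩, fun j => (E j).1, fun j => (hI j).1, hco,
    hinf, ⟨?_, ?_⟩, fun j => hPVq _ (hI j)⟩
  · intro x y hxy
    rw [← sub_eq_zero]
    have : x - y ∈ (⨅ j, (E j).1) := by
      rw [Submodule.mem_iInf]
      intro j
      exact Ideal.Quotient.eq.1 (congrFun hxy j)
    rw [hinf] at this
    simpa using this
  · intro y
    obtain ⟨x, hx⟩ := Ideal.pi_quotient_surjective (I := fun j => (E j).1)
      (fun j j' h => Ideal.isCoprime_iff_sup_eq.2 (hco h)) y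
    exact ⟨x, funext hx⟩

end PV
end
end

section
/- Let K be a difference field of characteristic zero with C_K = D_K and A ∈ GL_n(K). Let R'' = K[V, 1/det(V)] be a difference ring extension of K that is an integral domain, generated over K by the entries of a matrix V ∈ GL_n(R'') with σ(V) = AV and by 1/det(V), and let L₁ be the field of fractions of R'' (with σ extended canonically). If C_{L₁} is a finite algebraic extension of C_K, then R'' is a simple difference ring, i.e., a Picard-Vessiot ring for σ(X) = AX over K. -/
open scoped TensorProduct

noncomputable section

namespace PV

set_option synthInstance.maxHeartbeats 1000000

/-! Auxiliary lemmas -/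

/-- A homomorphism out of a finitely generated domain over whose image another injective
homomorphism is algebraic is itself injective. -/
theorem aux_injective {K R Ω : Type} [Field K] [CommRing R] [IsDomain R] [Algebra K R]
    [CommRing Ω] [IsDomain Ω] [Algebra K Ω] [Algebra.FiniteType K R] (f g : R →ₐ[K] Ω)
    (hf : Function.Injective f) (h : ∀ r, IsAlgebraic g.range (f r)) :
    Function.Injective g := by
  have htr : Algebra.trdeg K R ≤ Algebra.trdeg K g.range := by
    let E := Subalgebra.algebraicClosure g.range Ω
    let f' : R →ₐ[K] E := f.codRestrict (E.restrictScalars K) (fun r => h r)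
    have h1 : Algebra.trdeg K R ≤ Algebra.trdeg K E :=
      trdeg_le_of_injective f' (fun a b hab => hf (congrArg Subtype.val hab))
    have : Algebra.IsAlgebraic g.range E := inferInstance
    have h2 := trdeg_add_eq K g.range (A := E)
    rw [trdeg_eq_zero (R := g.range) (A := E), add_zero] at h2
    rwa [h2]
  obtain ⟨ι, y, hy⟩ := exists_isTranscendenceBasis' K g.range
  have hsurj : Function.Surjective g.rangeRestrict := g.rangeRestrict_surjective
  choose z hz using fun i => hsurj (y i)
  have hyz : y = g.rangeRestrict ∘ z := funext fun i => (hz i).symm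
  have hz_ind : AlgebraicIndependent K z := by
    apply AlgebraicIndependent.of_comp g.rangeRestrict
    rw [← hyz]; exact hy.1
  have hcard : Cardinal.mk ι = Algebra.trdeg K g.range := hy.cardinalMk_eq_trdeg
  have hfin : Algebra.trdeg K R < Cardinal.aleph0 := trdeg_lt_aleph0_of_finiteType
  have hle := hz_ind.cardinalMk_le_trdeg
  have : Finite ι := Cardinal.lt_aleph0_iff_finite.1 (hle.trans_lt hfin)
  have hbasis : IsTranscendenceBasis K z :=
    hz_ind.isTranscendenceBasis_of_trdeg_le_of_finite (by rw [hcard]; exact htr)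
  have halg := hbasis.isAlgebraic
  rw [injective_iff_map_eq_zero]
  intro r hr
  by_contra hr0
  obtain ⟨p, hp0, hp⟩ := (halg.isAlgebraic r).exists_nonzero_dvd (mem_nonZeroDivisors_of_ne_zero hr0)
  obtain ⟨q, hq⟩ := hp
  have hgp : g (p : R) = 0 := by
    have : (p : R) = r * q := hq
    rw [this, map_mul, hr, zero_mul]
  obtain ⟨P, hP⟩ : ∃ P, MvPolynomial.aeval z P = (p : R) := by
    obtain ⟨p, hpm⟩ := p
    rw [Algebra.adjoin_range_eq_range_aeval] at hpm
    exact hpm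
  have hP' : MvPolynomial.aeval y P = 0 := by
    rw [hyz]
    apply Subtype.val_injective
    have h3 : g.rangeRestrict (MvPolynomial.aeval z P) = MvPolynomial.aeval (g.rangeRestrict ∘ z) P := by
      rw [← AlgHom.comp_apply, MvPolynomial.comp_aeval]
      rfl
    rw [← h3]
    change g (MvPolynomial.aeval z P) = 0
    rw [← hgp, ← hP]
  have hP0 : P = 0 := hy.1 (by rw [hP', map_zero])
  apply hp0
  apply Subtype.val_injective
  rw [← hP, hP0]; simp

/-- Fixed vectors: linear dependence over `L` descends to the constants. -/
theorem aux_fixed {L T : Type} [Field L] [CommRing T] [Algebra L T] (σL : L ≃+* L)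
    (σT : T →+* T) (hc : ∀ l, σT (algebraMap L T l) = algebraMap L T (σL l))
    (m : Submodule (constantsF σL) T) (hm : ∀ x ∈ m, σT x = x)
    (h1 : (1 : T) ∈ Submodule.span L (m : Set T)) : (1 : T) ∈ m := by
  obtain ⟨b, hbm, hspan, hli⟩ := exists_linearIndependent L (m : Set T)
  rw [← hspan] at h1
  rw [Finsupp.mem_span_iff_linearCombination] at h1
  obtain ⟨c, hc1⟩ := h1
  have hfix : c.mapRange σL (map_zero σL) = c := by
    apply hli
    rw [hc1]
    have := congrArg σT hc1
    rw [map_one] at this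
    rw [← this, Finsupp.linearCombination_apply, Finsupp.linearCombination_apply, Finsupp.sum_mapRange_index (by simp),
      Finsupp.sum, Finsupp.sum, map_sum]
    refine Finset.sum_congr rfl fun x _ => ?_
    rw [Algebra.smul_def, Algebra.smul_def, map_mul, hc, hm _ (hbm x.2)]
  rw [← hc1, Finsupp.linearCombination_apply]
  refine Submodule.sum_mem _ fun x _ => ?_
  have hx : σL (c x) = c x := by
    conv_rhs => rw [← hfix]
    simp
  exact m.smul_mem (⟨c x, hx⟩ : constantsF σL) (hbm x.2)

/-- Specialisation of constants. -/
theorem aux_spec {L T : Type} [Field L] [CommRing T] [Algebra L T] [Nontrivial T] (σL : L ≃+* L)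
    (σT : T →+* T) (hc : ∀ l, σT (algebraMap L T l) = algebraMap L T (σL l))
    (s : Set T) (hs : s.Finite) (hfix : ∀ x ∈ s, σT x = x) (hgen : Algebra.adjoin L s = ⊤) :
    ∃ Q : Ideal T, Q.IsMaximal ∧
      ∀ x ∈ s, IsIntegral (constantsF σL) (Ideal.Quotient.mk Q x) := by
  let B := Algebra.adjoin (constantsF σL) s
  have hB : ∀ x ∈ B, σT x = x := by
    intro x hx
    induction hx using Algebra.adjoin_induction with
    | mem x hx => exact hfix x hx
    | algebraMap r =>
      change σT (algebraMap L T r.1) = algebraMap L T r.1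
      rw [hc]; exact congrArg _ r.2
    | add x y _ _ hx hy => rw [map_add, hx, hy]
    | mul x y _ _ hx hy => rw [map_mul, hx, hy]
  have hBspan : Submodule.span L (B : Set T) = ⊤ := by
    rw [eq_top_iff, ← Algebra.top_toSubmodule, ← hgen, Algebra.adjoin_eq_span]
    refine Submodule.span_mono ?_
    have : Submonoid.closure s ≤ B.toSubmonoid :=
      Submonoid.closure_le.2 Algebra.subset_adjoin
    exact this
  obtain ⟨m, hmax⟩ := Ideal.exists_maximal B
  let m' : Submodule (constantsF σL) T := (m.restrictScalars (constantsF σL)).map B.val.toLinearMap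
  have hm'fix : ∀ x ∈ m', σT x = x := by
    rintro _ ⟨x, _, rfl⟩
    exact hB _ x.2
  have hm'1 : (1 : T) ∉ m' := by
    rintro ⟨x, hx, hx1⟩
    have : x = 1 := Subtype.val_injective hx1
    subst this
    exact hmax.ne_top ((Ideal.eq_top_iff_one _).2 hx)
  have hJ : Ideal.map B.val m ≠ ⊤ := by
    intro htop
    apply hm'1
    refine aux_fixed σL σT hc m' hm'fix ?_
    have h1 : (1 : T) ∈ Ideal.map B.val m := by rw [htop]; trivial
    refine Submodule.span_induction (p := fun x _ => x ∈ Submodule.span L (m' : Set T))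
      ?_ ?_ ?_ ?_ h1
    · rintro _ ⟨x, hx, rfl⟩
      exact Submodule.subset_span ⟨x, hx, rfl⟩
    · exact zero_mem _
    · intro x y _ _ hx hy; exact add_mem hx hy
    · intro t x _ hx
      have ht : t ∈ Submodule.span L (B : Set T) := by rw [hBspan]; trivial
      have := Submodule.mul_mem_mul ht hx
      rw [Submodule.span_mul_span] at this
      refine Submodule.span_mono ?_ this
      rintro _ ⟨b, hb, _, ⟨y, hy, rfl⟩, rfl⟩
      exact ⟨⟨b, hb⟩ * y, m.mul_mem_left _ hy, rfl⟩
  obtain ⟨Q, hQ, hJQ⟩ := Ideal.exists_le_maximal _ hJ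
  refine ⟨Q, hQ, fun x hx => ?_⟩
  have hft : Algebra.FiniteType (constantsF σL) B :=
    (Subalgebra.fg_iff_finiteType _).1 ⟨hs.toFinset, by simp [B]⟩
  let := Ideal.Quotient.field m
  have hfin : Module.Finite (constantsF σL) (B ⧸ m) :=
    finite_of_finite_type_of_isJacobsonRing _ _
  let φ : B ⧸ m →ₐ[constantsF σL] T ⧸ Q := Ideal.Quotient.liftₐ m
    ((Ideal.Quotient.mkₐ (constantsF σL) Q).comp B.val) (by
      intro a ha
      exact Ideal.Quotient.eq_zero_iff_mem.2 (hJQ (Ideal.mem_map_of_mem _ ha)))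
  have hi : IsIntegral (constantsF σL) (Ideal.Quotient.mk m (⟨x, Algebra.subset_adjoin hx⟩ : B)) :=
    Algebra.IsIntegral.isIntegral _
  exact hi.map φ

/-- The tensor product of two semilinear endomorphisms. -/
theorem aux_tensor {K L S : Type} [Field K] [CommRing L] [CommRing S] [Algebra K L] [Algebra K S]
    (σK : K →+* K) (σL : L →+* L) (σS : S →+* S)
    (hL : ∀ x, σL (algebraMap K L x) = algebraMap K L (σK x))
    (hS : ∀ x, σS (algebraMap K S x) = algebraMap K S (σK x)) :
    ∃ σT : L ⊗[K] S →+* L ⊗[K] S, ∀ l s, σT (l ⊗ₜ s) = σL l ⊗ₜ σS s := by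
  let F : L →+ S →+ L ⊗[K] S :=
    { toFun := fun l =>
        { toFun := fun s => σL l ⊗ₜ[K] σS s
          map_zero' := by simp
          map_add' := fun a b => by simp [TensorProduct.tmul_add] }
      map_zero' := by ext; simp
      map_add' := fun a b => by ext; simp [TensorProduct.add_tmul] }
  let G : L ⊗[K] S →+ L ⊗[K] S := TensorProduct.liftAddHom F (by
    intro r l s
    change σL (r • l) ⊗ₜ[K] σS s = σL l ⊗ₜ[K] σS (r • s)
    rw [Algebra.smul_def, Algebra.smul_def, map_mul, map_mul, hL, hS, ← Algebra.smul_def,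
      ← Algebra.smul_def, TensorProduct.smul_tmul])
  have hG : ∀ l s, G (l ⊗ₜ s) = σL l ⊗ₜ σS s := fun l s => rfl
  refine ⟨{ toFun := G, map_zero' := map_zero G, map_add' := map_add G,
             map_one' := ?_, map_mul' := ?_ }, hG⟩
  · rw [Algebra.TensorProduct.one_def, hG, map_one, map_one]
  · intro x y
    induction x using TensorProduct.induction_on with
    | zero => simp
    | add a b ha hb => simp only [add_mul, map_add] at *; rw [ha, hb]
    | tmul a b =>
      induction y using TensorProduct.induction_on with
      | zero => simp
      | add c d hc hd => simp only [mul_add, map_add] at *; rw [hc, hd]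
      | tmul c d => simp [hG, Algebra.TensorProduct.tmul_mul_tmul]

/-- Elements integral over the constants of `L` are integral over `K`. -/
theorem aux_int {K L Ω : Type} [Field K] [Field L] [CommRing Ω] [Algebra K L] [Algebra K Ω]
    [Algebra L Ω] [IsScalarTower K L Ω] (σK : K ≃+* K) (σL : L ≃+* L) (ι : K →+* L)
    (hι : ι = algebraMap K L)
    (hfin : SubfieldFinite ((constantsF σK).map ι) (constantsF σL))
    (x : Ω) (hx : IsIntegral (constantsF σL) x) : IsIntegral K x := by
  obtain ⟨hle, hf⟩ := hfin
  let : Algebra ((constantsF σK).map ι) (constantsF σL) := (Subfield.inclusion hle).toAlgebra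
  have hf' : Module.Finite ((constantsF σK).map ι) (constantsF σL) := hf
  have : IsScalarTower ((constantsF σK).map ι) (constantsF σL) Ω :=
    IsScalarTower.of_algebraMap_eq fun y => rfl
  obtain ⟨p, hp, hpx⟩ : IsIntegral ((constantsF σK).map ι) x := isIntegral_trans x hx
  let e : K ≃+* ι.fieldRange := RingEquiv.ofBijective ι.rangeRestrictField
    ⟨ι.rangeRestrictField.injective, by rintro ⟨_, y, rfl⟩; exact ⟨y, rfl⟩⟩
  have hle2 : (constantsF σK).map ι ≤ ι.fieldRange := by
    rintro _ ⟨y, _, rfl⟩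
    exact ⟨y, rfl⟩
  let h : (constantsF σK).map ι →+* K := e.symm.toRingHom.comp (Subfield.inclusion hle2)
  have hh : ∀ y, ι (h y) = y.1 := fun y => by
    have := e.apply_symm_apply (Subfield.inclusion hle2 y)
    exact congrArg Subtype.val this
  refine ⟨p.map h, hp.map h, ?_⟩
  rw [Polynomial.eval₂_map]
  have : (algebraMap K Ω).comp h = algebraMap ((constantsF σK).map ι) Ω := by
    ext y
    change algebraMap K Ω (h y) = algebraMap L Ω y.1
    rw [IsScalarTower.algebraMap_apply K L Ω, ← hh y, ← hι]
  rw [this]; exact hpx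

/-- Units of matrices pushed along a ring homomorphism. -/
def mapU {R S : Type} [CommRing R] [CommRing S] {n : ℕ} (f : R →+* S)
    (V : (Matrix (Fin n) (Fin n) R)ˣ) : (Matrix (Fin n) (Fin n) S)ˣ :=
  Units.map (f.mapMatrix : Matrix (Fin n) (Fin n) R →+* Matrix (Fin n) (Fin n) S).toMonoidHom V

theorem mapU_val {R S : Type} [CommRing R] [CommRing S] {n : ℕ} (f : R →+* S)
    (V : (Matrix (Fin n) (Fin n) R)ˣ) (i j) : (mapU f V).val i j = f (V.val i j) := rfl

theorem mapU_mapU {R S T : Type} [CommRing R] [CommRing S] [CommRing T] {n : ℕ} (f : R →+* S)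
    (g : S →+* T) (V : (Matrix (Fin n) (Fin n) R)ˣ) : mapU g (mapU f V) = mapU (g.comp f) V :=
  Units.ext rfl

theorem mapU_mul {R S : Type} [CommRing R] [CommRing S] {n : ℕ} (f : R →+* S)
    (V W : (Matrix (Fin n) (Fin n) R)ˣ) : mapU f (V * W) = mapU f V * mapU f W := map_mul _ _ _

theorem mapU_inv {R S : Type} [CommRing R] [CommRing S] {n : ℕ} (f : R →+* S)
    (V : (Matrix (Fin n) (Fin n) R)ˣ) : mapU f V⁻¹ = (mapU f V)⁻¹ := map_inv _ _

/-- The core of the argument. -/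
theorem aux_simple {K : Type} [Field K] (σK : K ≃+* K)
    {n : ℕ} (A : (Matrix (Fin n) (Fin n) K)ˣ)
    {R'' : Type} [CommRing R''] [IsDomain R''] [Algebra K R''] (σ'' : R'' ≃+* R'')
    (hcompat : DiffCompat σK σ'')
    (V : (Matrix (Fin n) (Fin n) R'')ˣ) (hV : FundMatrix σ'' A V)
    (hgen : Algebra.adjoin K
      (entries V.val ∪ entries (↑V⁻¹ : Matrix (Fin n) (Fin n) R'')) = ⊤)
    (L : Type) [Field L] [Algebra K L] [Algebra R'' L] [IsScalarTower K R'' L]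
    (hinj : Function.Injective (algebraMap R'' L))
    (σL : L ≃+* L)
    (hσL : ∀ x : R'', σL (algebraMap R'' L x) = algebraMap R'' L (σ'' x))
    (hfin : SubfieldFinite
      ((constantsF σK).map ((algebraMap R'' L).comp (algebraMap K R'')))
      (constantsF σL)) :
    IsSimpleDiff σ'' := by
  intro I hI
  by_contra hcon
  rw [not_or] at hcon
  obtain ⟨hbot, htop⟩ := hcon
  have hS : Nontrivial (R'' ⧸ I) := Ideal.Quotient.nontrivial_iff.2 htop
  let σS : R'' ⧸ I →+* R'' ⧸ I := Ideal.quotientMap I (σ'' : R'' →+* R'') (fun x hx => hI x hx)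
  have hσS : ∀ r, σS (Ideal.Quotient.mk I r) = Ideal.Quotient.mk I (σ'' r) := fun r => rfl
  have hLK : ∀ x, σL (algebraMap K L x) = algebraMap K L (σK x) := fun x => by
    rw [IsScalarTower.algebraMap_apply K R'' L, hσL, hcompat,
      ← IsScalarTower.algebraMap_apply K R'' L]
  have hSK : ∀ x, σS (algebraMap K (R'' ⧸ I) x) = algebraMap K (R'' ⧸ I) (σK x) := fun x => by
    change σS (Ideal.Quotient.mk I (algebraMap K R'' x)) = Ideal.Quotient.mk I (algebraMap K R'' _)
    rw [hσS, hcompat]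
  obtain ⟨σT, hσT⟩ := aux_tensor (σK : K →+* K) (σL : L →+* L) σS hLK hSK
  have hTnt : Nontrivial (L ⊗[K] (R'' ⧸ I)) := inferInstance
  let α : R'' →ₐ[K] L ⊗[K] (R'' ⧸ I) :=
    Algebra.TensorProduct.includeLeft.comp (IsScalarTower.toAlgHom K R'' L)
  let β : R'' →ₐ[K] L ⊗[K] (R'' ⧸ I) :=
    Algebra.TensorProduct.includeRight.comp (Ideal.Quotient.mkₐ K I)
  have hα : ∀ r, α r = algebraMap R'' L r ⊗ₜ 1 := fun r => rfl
  have hβ : ∀ r, β r = 1 ⊗ₜ Ideal.Quotient.mk I r := fun r => rfl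
  have hσα : σT.comp α.toRingHom = α.toRingHom.comp (σ'' : R'' →+* R'') := by
    ext r
    change σT (α r) = α (σ'' r)
    rw [hα, hα, hσT, map_one, ← hσL]; rfl
  have hσβ : σT.comp β.toRingHom = β.toRingHom.comp (σ'' : R'' →+* R'') := by
    ext r
    change σT (β r) = β (σ'' r)
    rw [hβ, hβ, hσT, map_one, hσS]
  have hVu : mapU (σ'' : R'' →+* R'') V = mapU (algebraMap K R'') A * V := Units.ext hV
  let AT := mapU (algebraMap K (L ⊗[K] (R'' ⧸ I))) A
  let M := (mapU β.toRingHom V)⁻¹ * mapU α.toRingHom V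
  have hαV : mapU σT (mapU α.toRingHom V) = AT * mapU α.toRingHom V := by
    rw [mapU_mapU, hσα, ← mapU_mapU, hVu, mapU_mul, mapU_mapU]
    congr 2
    exact α.comp_algebraMap
  have hβV : mapU σT (mapU β.toRingHom V) = AT * mapU β.toRingHom V := by
    rw [mapU_mapU, hσβ, ← mapU_mapU, hVu, mapU_mul, mapU_mapU]
    congr 2
    exact β.comp_algebraMap
  have hM : mapU σT M = M := by
    change mapU σT ((mapU β.toRingHom V)⁻¹ * mapU α.toRingHom V) = M
    rw [mapU_mul, mapU_inv, hαV, hβV]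
    simp [M]
  have hM' : mapU σT M⁻¹ = M⁻¹ := by rw [mapU_inv, hM]
  let s := entries M.val ∪ entries (↑M⁻¹ : Matrix (Fin n) (Fin n) (L ⊗[K] (R'' ⧸ I)))
  have hs : s.Finite := (Set.finite_range _).union (Set.finite_range _)
  have hfix : ∀ x ∈ s, σT x = x := by
    rintro _ (⟨⟨i, j⟩, rfl⟩ | ⟨⟨i, j⟩, rfl⟩)
    · change σT (M.val i j) = M.val i j
      rw [← mapU_val, hM]
    · change σT (M⁻¹.val i j) = M⁻¹.val i j
      rw [← mapU_val, hM']
  have hβVM : mapU β.toRingHom V = mapU α.toRingHom V * M⁻¹ := by simp [M]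
  have hβVM' : mapU β.toRingHom V⁻¹ = M * mapU α.toRingHom V⁻¹ := by simp [M, mapU_inv]
  have hαVM : mapU α.toRingHom V = mapU β.toRingHom V * M := by simp [M]
  have hαVM' : mapU α.toRingHom V⁻¹ = M⁻¹ * mapU β.toRingHom V⁻¹ := by simp [M, mapU_inv]
  have hgenT : Algebra.adjoin L s = ⊤ := by
    have hαmem : ∀ r, α r ∈ Algebra.adjoin L s := fun r =>
      (Algebra.adjoin L s).algebraMap_mem (algebraMap R'' L r)
    have hM1 : ∀ i j, M.val i j ∈ Algebra.adjoin L s := fun i j =>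
      Algebra.subset_adjoin (Or.inl ⟨(i, j), rfl⟩)
    have hM2 : ∀ i j, M⁻¹.val i j ∈ Algebra.adjoin L s := fun i j =>
      Algebra.subset_adjoin (Or.inr ⟨(i, j), rfl⟩)
    have hβmem : ∀ r, β r ∈ Algebra.adjoin L s := by
      have : Algebra.adjoin K (entries V.val ∪ entries (↑V⁻¹ : Matrix (Fin n) (Fin n) R'')) ≤
          ((Algebra.adjoin L s).restrictScalars K).comap β := by
        refine Algebra.adjoin_le ?_
        rintro _ (⟨⟨i, j⟩, rfl⟩ | ⟨⟨i, j⟩, rfl⟩)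
        · change (mapU β.toRingHom V).val i j ∈ Algebra.adjoin L s
          rw [hβVM, Units.val_mul, Matrix.mul_apply]
          exact sum_mem fun k _ => mul_mem (hαmem _) (hM2 _ _)
        · change (mapU β.toRingHom V⁻¹).val i j ∈ Algebra.adjoin L s
          rw [hβVM', Units.val_mul, Matrix.mul_apply]
          exact sum_mem fun k _ => mul_mem (hM1 _ _) (hαmem _)
      intro r
      exact this (by rw [hgen]; trivial)
    rw [eq_top_iff]
    intro t _
    induction t using TensorProduct.induction_on with
    | zero => exact zero_mem _
    | add a b ha hb => exact add_mem (ha trivial) (hb trivial)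
    | tmul l x =>
      obtain ⟨r, rfl⟩ := Ideal.Quotient.mk_surjective x
      have := mul_mem ((Algebra.adjoin L s).algebraMap_mem l) (hβmem r)
      rw [hβ, Algebra.TensorProduct.algebraMap_apply, Algebra.TensorProduct.tmul_mul_tmul] at this
      simpa using this
  have hTL : ∀ l, σT (algebraMap L _ l) = algebraMap L _ (σL l) := fun l => by
    rw [Algebra.TensorProduct.algebraMap_apply, Algebra.TensorProduct.algebraMap_apply, hσT,
      map_one]
    rfl
  obtain ⟨Q, hQ, hQint⟩ := aux_spec σL σT hTL s hs hfix hgenT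
  have hdom : IsDomain (L ⊗[K] (R'' ⧸ I) ⧸ Q) := Ideal.Quotient.isDomain Q
  let q := Ideal.Quotient.mkₐ K Q
  have hft : Algebra.FiniteType K R'' := by
    refine ⟨⟨(((Set.finite_range _).union (Set.finite_range _) :
      (entries V.val ∪ entries (↑V⁻¹ : Matrix (Fin n) (Fin n) R'')).Finite)).toFinset, ?_⟩⟩
    rw [Set.Finite.coe_toFinset]
    exact hgen
  have hintK : ∀ x ∈ s, IsIntegral K (q x) := fun x hx =>
    aux_int σK σL _ (IsScalarTower.algebraMap_eq K R'' L).symm hfin _ (hQint x hx)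
  have hginj : Function.Injective (q.comp β) := by
    refine aux_injective (q.comp α) (q.comp β) ?_ ?_
    · intro a b hab
      apply hinj
      exact (algebraMap L (L ⊗[K] (R'' ⧸ I) ⧸ Q)).injective hab
    · have halgM : ∀ x ∈ s, IsAlgebraic (q.comp β).range (q x) := fun x hx =>
        ((hintK x hx).tower_top).isAlgebraic
      have halgβ : ∀ r, IsAlgebraic (q.comp β).range (q (β r)) := fun r =>
        isAlgebraic_algebraMap (⟨q (β r), r, rfl⟩ : (q.comp β).range)
      have : Algebra.adjoin K (entries V.val ∪ entries (↑V⁻¹ : Matrix (Fin n) (Fin n) R'')) ≤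
          ((Subalgebra.algebraicClosure (q.comp β).range
            (L ⊗[K] (R'' ⧸ I) ⧸ Q)).restrictScalars K).comap (q.comp α) := by
        refine Algebra.adjoin_le ?_
        rintro _ (⟨⟨i, j⟩, rfl⟩ | ⟨⟨i, j⟩, rfl⟩)
        · change q ((mapU α.toRingHom V).val i j) ∈
            Subalgebra.algebraicClosure (q.comp β).range (L ⊗[K] (R'' ⧸ I) ⧸ Q)
          rw [hαVM, Units.val_mul, Matrix.mul_apply, map_sum]
          refine sum_mem fun k _ => ?_
          rw [map_mul]
          exact mul_mem (halgβ _) (halgM _ (Or.inl ⟨(k, j), rfl⟩))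
        · change q ((mapU α.toRingHom V⁻¹).val i j) ∈
            Subalgebra.algebraicClosure (q.comp β).range (L ⊗[K] (R'' ⧸ I) ⧸ Q)
          rw [hαVM', Units.val_mul, Matrix.mul_apply, map_sum]
          refine sum_mem fun k _ => ?_
          rw [map_mul]
          exact mul_mem (halgM _ (Or.inr ⟨(i, k), rfl⟩)) (halgβ _)
      intro r
      exact this (by rw [hgen]; trivial)
  apply hbot
  rw [eq_bot_iff]
  intro x hx
  apply hginj
  rw [map_zero]
  change q (β x) = 0
  rw [hβ, Ideal.Quotient.eq_zero_iff_mem.2 hx, TensorProduct.tmul_zero, map_zero]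



/-- If `C_K = D_K`, `R'' = K[V, 1/det V]` is a difference domain for
`σ(X) = AX` whose fraction field `L₁` has constants finite algebraic over `C_K`, then
`R''` is a simple difference ring, i.e. a Picard-Vessiot ring for `σ(X) = AX` over `K`. -/
theorem statement_11 {K : Type} [Field K] [CharZero K] (σK : K ≃+* K)
    (hCD : ∀ a : K, (∃ m, 0 < m ∧ (⇑σK)^[m] a = a) → σK a = a)
    {n : ℕ} (A : (Matrix (Fin n) (Fin n) K)ˣ)
    {R'' : Type} [CommRing R''] [IsDomain R''] [Algebra K R''] (σ'' : R'' ≃+* R'')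
    (hcompat : DiffCompat σK σ'')
    (V : (Matrix (Fin n) (Fin n) R'')ˣ) (hV : FundMatrix σ'' A V)
    (hgen : Algebra.adjoin K
      (entries V.val ∪ entries (↑V⁻¹ : Matrix (Fin n) (Fin n) R'')) = ⊤)
    -- σ extended to the fraction field L₁
    (σL : FractionRing R'' ≃+* FractionRing R'')
    (hσL : ∀ x : R'', σL (algebraMap R'' (FractionRing R'') x) =
      algebraMap R'' (FractionRing R'') (σ'' x))
    -- C_{L₁} is a finite algebraic extension of C_K
    (hfin : SubfieldFinite
      ((constantsF σK).map ((algebraMap R'' (FractionRing R'')).comp (algebraMap K R'')))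
      (constantsF σL)) :
    IsSimpleDiff σ'' ∧ IsPVRing σK σ'' A := by
  have hsimple : IsSimpleDiff σ'' :=
    aux_simple σK A σ'' hcompat V hV hgen (FractionRing R'')
      (IsFractionRing.injective R'' (FractionRing R'')) σL hσL hfin
  exact ⟨hsimple, hcompat, hsimple, V, hV, hgen⟩

end PV
end
end
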